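/- arXiv:1206.1279 — 7 statements merged into one kernel-verified Lean document; each statement's English description precedes it below -/
import Mathlib

section
/- For all natural numbers n and m, the convolution of Schreier families satisfies S_n * S_m = S_{n+m}; that is, a finite set F of positive integers belongs to S_{n+m} if and only if F can be written as F = F_1 ∪ ... ∪ F_k where F_1 < ... < F_k, each F_j belongs to S_m, and the set {min F_j : j = 1,...,k} belongs to S_n. -/
/-- The Schreier families: `Schreier 0` consists of singletons of positive
integers, and `Schreier (n+1)` consists of unions `F₁ ∪ ⋯ ∪ F_k` where
`F₁ < ⋯ < F_k`, each `F_j ∈ Schreier n`, and `k ≤ min F₁`. -/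
def Schreier : ℕ → Set (Finset ℕ)
  | 0 => {F | ∃ n : ℕ, 0 < n ∧ F = {n}}
  | n + 1 => {F | ∃ (k : ℕ) (hk : 0 < k) (G : Fin k → Finset ℕ),
      (∀ i, G i ∈ Schreier n) ∧
      (∀ i j : Fin k, i < j → ∀ a ∈ G i, ∀ b ∈ G j, a < b) ∧
      (∀ b ∈ G ⟨0, hk⟩, k ≤ b) ∧
      F = Finset.univ.biUnion G}

/-!
If `M` is the set of minima of the blocks `F₁ < ⋯ < F_k`, the blocks are recovered from `M` and
`F = F₁ ∪ ⋯ ∪ F_k`: the one starting at `a ∈ M` consists of those `x ∈ F` for which `a` is the last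
element of `M` not exceeding `x`. So a convolution `A * B` of arbitrary families amounts to a
condition on the pair `M ⊆ F`, and in a chain `M ⊆ P ⊆ F` the `P`-blocks of `F` are obtained by
subdividing the `M`-blocks of `F`. This gives `(A * B) * C = A * (B * C)`. Since
`S_{n+1} = S_1 * S_n`, induction on `n` yields
`S_{n+1} * S_m = S_1 * (S_n * S_m) = S_1 * S_{n+m} = S_{n+m+1}`.
-/

section Convolution

variable {α : Type*} [LinearOrder α] {M P F : Finset α} {a b c x y : α}

/-- The block of `F` starting at `a`, when `F` is cut into consecutive pieces at the elements of
`M`. It is meaningful only for `a ∈ M`, which is not enforced. -/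
def block (M F : Finset α) (a : α) : Finset α :=
  {x ∈ F | a ≤ x ∧ ∀ b ∈ M, b ≤ x → b ≤ a}

theorem mem_block : x ∈ block M F a ↔ x ∈ F ∧ a ≤ x ∧ ∀ b ∈ M, b ≤ x → b ≤ a :=
  Finset.mem_filter

theorem block_subset : block M F a ⊆ F :=
  Finset.filter_subset _ _

theorem block_mono (hPF : P ⊆ F) : block M P a ⊆ block M F a :=
  Finset.filter_subset_filter _ hPF

theorem isLeast_block (ha : a ∈ F) : IsLeast (block M F a : Set α) a :=
  ⟨mem_block.2 ⟨ha, le_rfl, fun _ _ h => h⟩, fun _ hx => (mem_block.1 hx).2.1⟩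

theorem lt_of_mem_block (hb : b ∈ M) (hab : a < b) (hx : x ∈ block M F a) : x < b :=
  lt_of_not_ge fun hbx => hab.not_ge ((mem_block.1 hx).2.2 b hb hbx)

theorem lt_of_mem_block_of_mem_block (hb : b ∈ M) (hab : a < b) (hx : x ∈ block M F a)
    (hy : y ∈ block M F b) : x < y :=
  (lt_of_mem_block hb hab hx).trans_le (mem_block.1 hy).2.1

theorem exists_mem_block (hFM : IsCoinitialFor (F : Set α) M) (hx : x ∈ F) :
    ∃ a ∈ M, x ∈ block M F a := by
  have hne : {a ∈ M | a ≤ x}.Nonempty := by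
    obtain ⟨a, ha, hax⟩ := hFM hx
    exact ⟨a, Finset.mem_filter.2 ⟨ha, hax⟩⟩
  obtain ⟨ha, hax⟩ := Finset.mem_filter.1 (Finset.max'_mem _ hne)
  exact ⟨_, ha, mem_block.2
    ⟨hx, hax, fun b hb hbx => Finset.le_max' _ b (Finset.mem_filter.2 ⟨hb, hbx⟩)⟩⟩

theorem biUnion_block (hFM : IsCoinitialFor (F : Set α) M) : M.biUnion (block M F) = F := by
  refine (Finset.biUnion_subset.2 fun _ _ => block_subset).antisymm fun x hx => ?_
  exact Finset.mem_biUnion.2 (exists_mem_block hFM hx)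

theorem block_singleton (hF : a ∈ lowerBounds (F : Set α)) : block {a} F a = F :=
  Finset.filter_true_of_mem fun x hx => ⟨hF hx, by simp⟩

theorem block_block (hMP : M ⊆ P) (hc : c ∈ block M P a) :
    block (block M P a) (block M F a) c = block P F c := by
  obtain ⟨-, hac, hcM⟩ := mem_block.1 hc
  ext x
  constructor
  · intro hx
    obtain ⟨hxa, hcx, hxN⟩ := mem_block.1 hx
    obtain ⟨hxF, -, hxM⟩ := mem_block.1 hxa
    refine mem_block.2 ⟨hxF, hcx, fun d hd hdx => ?_⟩
    rcases le_total d a with hda | had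
    · exact hda.trans hac
    · exact hxN d (mem_block.2 ⟨hd, had, fun b hb hbd => hxM b hb (hbd.trans hdx)⟩) hdx
  · intro hx
    obtain ⟨hxF, hcx, hxP⟩ := mem_block.1 hx
    have hxa : x ∈ block M F a :=
      mem_block.2 ⟨hxF, hac.trans hcx, fun b hb hbx => hcM b hb (hxP b (hMP hb) hbx)⟩
    exact mem_block.2 ⟨hxa, hcx, fun d hd => hxP d (block_subset hd)⟩

theorem block_image_biUnion {ι : Type*} [LinearOrder ι] {s : Finset ι} {G : ι → Finset α}
    {μ : ι → α} (hμ : ∀ i ∈ s, IsLeast (G i : Set α) (μ i))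
    (hG : ∀ i ∈ s, ∀ j ∈ s, i < j → ∀ x ∈ G i, x < μ j) {i : ι} (hi : i ∈ s) :
    block (s.image μ) (s.biUnion G) (μ i) = G i := by
  have hmono : StrictMonoOn μ s := fun i hi j hj hij => hG i hi j hj hij _ (hμ i hi).1
  ext x
  constructor
  · intro hx
    obtain ⟨hxG, hix, hmax⟩ := mem_block.1 hx
    obtain ⟨j, hj, hxj⟩ := Finset.mem_biUnion.1 hxG
    have hμji : μ j ≤ μ i := hmax _ (Finset.mem_image_of_mem μ hj) ((hμ j hj).2 hxj)
    have hji : j ≤ i := (hmono.le_iff_le hj hi).1 hμji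
    have hij : i ≤ j := le_of_not_gt fun hlt => (hG j hj i hi hlt x hxj).not_ge hix
    rwa [hij.antisymm hji]
  · intro hx
    refine mem_block.2 ⟨Finset.mem_biUnion.2 ⟨i, hi, hx⟩, (hμ i hi).2 hx, ?_⟩
    refine Finset.forall_mem_image.2 fun j hj hjx => (hmono.le_iff_le hj hi).2 ?_
    exact le_of_not_gt fun hij => (hG i hi j hj hij x hx).not_ge hjx

theorem block_biUnion {N : α → Finset α} (hN : ∀ a ∈ M, IsLeast (N a : Set α) a)
    (hlt : ∀ a ∈ M, ∀ b ∈ M, a < b → ∀ x ∈ N a, x < b) (ha : a ∈ M) :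
    block M (M.biUnion N) a = N a := by
  simpa using block_image_biUnion (μ := id) hN hlt ha

/-- The convolution `A * B` of two families of finite sets: `F ∈ A * B` if `F` splits into
consecutive blocks belonging to `B` whose minima form a set `M ∈ A`. The splitting is encoded by
`M` alone; coinitiality says that `M` contains a lower bound of each element of `F`. -/
def familyConvolution (A B : Set (Finset α)) : Set (Finset α) :=
  {F | ∃ M ∈ A, M ⊆ F ∧ IsCoinitialFor (F : Set α) M ∧ ∀ a ∈ M, block M F a ∈ B}

variable {A B C : Set (Finset α)}

theorem familyConvolution_assoc_subset :
    familyConvolution (familyConvolution A B) C ⊆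
      familyConvolution A (familyConvolution B C) := by
  rintro F ⟨P, ⟨M, hM, hMP, hPM, hB⟩, hPF, hFP, hC⟩
  refine ⟨M, hM, hMP.trans hPF, hFP.trans hPM, fun a ha => ?_⟩
  have hcoinitial : IsCoinitialFor (block M F a : Set α) (block M P a) := fun x hx =>
    ⟨a, (isLeast_block (hMP ha)).1, (mem_block.1 hx).2.1⟩
  refine ⟨block M P a, hB a ha, block_mono hPF, hcoinitial, fun c hc => ?_⟩
  rw [block_block hMP hc]
  exact hC c (block_subset hc)

theorem subset_familyConvolution_assoc :
    familyConvolution A (familyConvolution B C) ⊆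
      familyConvolution (familyConvolution A B) C := by
  rintro F ⟨M, hM, hMF, hFM, hBC⟩
  choose! N hNB hNsub hNcoinitial hNC using hBC
  have hNleast : ∀ a ∈ M, IsLeast (N a : Set α) a := fun a ha => by
    have hleast := isLeast_block (M := M) (hMF ha)
    obtain ⟨c, hc, hca⟩ := hNcoinitial a ha hleast.1
    have hac : a ≤ c := hleast.2 (hNsub a ha hc)
    exact ⟨hca.antisymm hac ▸ hc, fun x hx => hleast.2 (hNsub a ha hx)⟩
  have hblock : ∀ a ∈ M, block M (M.biUnion N) a = N a := fun a ha =>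
    block_biUnion hNleast
      (fun a ha b hb hab x hx => lt_of_mem_block hb hab (hNsub a ha hx)) ha
  have hMN : M ⊆ M.biUnion N := fun a ha => Finset.mem_biUnion.2 ⟨a, ha, (hNleast a ha).1⟩
  refine ⟨M.biUnion N, ⟨M, hM, hMN, fun x hx => ?_, fun a ha => ?_⟩, ?_, fun x hx => ?_,
    fun c hc => ?_⟩
  · obtain ⟨a, ha, hxa⟩ := Finset.mem_biUnion.1 hx
    exact ⟨a, ha, (hNleast a ha).2 hxa⟩
  · rw [hblock a ha]
    exact hNB a ha
  · exact Finset.biUnion_subset.2 fun a ha => (hNsub a ha).trans block_subset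
  · obtain ⟨a, ha, hxa⟩ := exists_mem_block hFM hx
    obtain ⟨c, hc, hcx⟩ := hNcoinitial a ha hxa
    exact ⟨c, Finset.mem_biUnion.2 ⟨a, ha, hc⟩, hcx⟩
  · obtain ⟨a, ha, hca⟩ := Finset.mem_biUnion.1 hc
    rw [← block_block hMN (hblock a ha ▸ hca), hblock a ha]
    exact hNC a ha c hca

theorem familyConvolution_assoc :
    familyConvolution (familyConvolution A B) C =
      familyConvolution A (familyConvolution B C) :=
  familyConvolution_assoc_subset.antisymm subset_familyConvolution_assoc

theorem biUnion_mem_familyConvolution {ι : Type*} [LinearOrder ι] {s : Finset ι}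
    {G : ι → Finset α} {μ : ι → α} (hB : ∀ i ∈ s, G i ∈ B)
    (hμ : ∀ i ∈ s, IsLeast (G i : Set α) (μ i))
    (hG : ∀ i ∈ s, ∀ j ∈ s, i < j → ∀ x ∈ G i, x < μ j) (hA : s.image μ ∈ A) :
    s.biUnion G ∈ familyConvolution A B := by
  refine ⟨s.image μ, hA, ?_, fun x hx => ?_, ?_⟩
  · exact Finset.image_subset_iff.2 fun i hi => Finset.mem_biUnion.2 ⟨i, hi, (hμ i hi).1⟩
  · obtain ⟨i, hi, hxi⟩ := Finset.mem_biUnion.1 hx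
    exact ⟨μ i, Finset.mem_image_of_mem μ hi, (hμ i hi).2 hxi⟩
  · refine Finset.forall_mem_image.2 fun i hi => ?_
    rw [block_image_biUnion hμ hG hi]
    exact hB i hi

theorem mem_familyConvolution_iff_exists_fin :
    F ∈ familyConvolution A B ↔
      ∃ (k : ℕ) (G : Fin k → Finset α) (μ : Fin k → α),
        (∀ i, G i ∈ B) ∧
        (∀ i j : Fin k, i < j → ∀ a ∈ G i, ∀ b ∈ G j, a < b) ∧
        (∀ i, IsLeast (G i : Set α) (μ i)) ∧
        Finset.image μ Finset.univ ∈ A ∧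
        F = Finset.univ.biUnion G := by
  constructor
  · rintro ⟨M, hM, hMF, hFM, hB⟩
    let e : Fin M.card ↪o α := M.orderEmbOfFin rfl
    have he (i) : e i ∈ M := M.orderEmbOfFin_mem rfl i
    have himage : Finset.image e Finset.univ = M := M.image_orderEmbOfFin_univ rfl
    refine ⟨M.card, fun i => block M F (e i), e, fun i => hB _ (he i), fun i j hij a ha b hb => ?_,
      fun i => isLeast_block (hMF (he i)), himage.symm ▸ hM, ?_⟩
    · exact lt_of_mem_block_of_mem_block (he j) (e.strictMono hij) ha hb
    · rw [← Finset.image_biUnion, himage, biUnion_block hFM]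
  · rintro ⟨k, G, μ, hB, hG, hμ, hA, rfl⟩
    exact biUnion_mem_familyConvolution (fun i _ => hB i) (fun i _ => hμ i)
      (fun i _ j _ hij x hx => hG i j hij x hx _ (hμ j).1) hA

end Convolution

section Schreier

variable {n : ℕ} {F : Finset ℕ}

theorem nonempty_of_mem_schreier (hF : F ∈ Schreier n) : F.Nonempty := by
  induction n generalizing F with
  | zero =>
    obtain ⟨a, -, rfl⟩ := hF
    exact Finset.singleton_nonempty a
  | succ n ih =>
    obtain ⟨k, hk, G, hG, -, -, rfl⟩ := hF
    exact Finset.biUnion_nonempty.2 ⟨⟨0, hk⟩, Finset.mem_univ _, ih (hG _)⟩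

theorem pos_of_mem_schreier (hF : F ∈ Schreier n) {a : ℕ} (ha : a ∈ F) : 0 < a := by
  induction n generalizing F with
  | zero =>
    obtain ⟨b, hb, rfl⟩ := hF
    rwa [Finset.mem_singleton.1 ha]
  | succ n ih =>
    obtain ⟨k, hk, G, hG, -, -, rfl⟩ := hF
    obtain ⟨i, -, hai⟩ := Finset.mem_biUnion.1 ha
    exact ih (hG i) hai

/-- The nonempty sets `M` with `|M| ≤ min M`. This is the family `S_1`, in the form in which it
bounds the number of blocks in the recursion for `Schreier`. -/
def schreierSets : Set (Finset ℕ) :=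
  {M | M.Nonempty ∧ ∀ a ∈ M, M.card ≤ a}

theorem schreier_succ (n : ℕ) :
    Schreier (n + 1) = familyConvolution schreierSets (Schreier n) := by
  ext F
  rw [mem_familyConvolution_iff_exists_fin]
  constructor
  · rintro ⟨k, hk, G, hGn, hG, hkG, rfl⟩
    have hne (i) : (G i).Nonempty := nonempty_of_mem_schreier (hGn i)
    have hk_le (i) (b) (hb : b ∈ G i) : k ≤ b := by
      rcases i.val.eq_zero_or_pos with hi | hi
      · exact hkG b ((Fin.ext hi : i = ⟨0, hk⟩) ▸ hb)
      · obtain ⟨a, ha⟩ := hne ⟨0, hk⟩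
        exact (hkG a ha).trans (hG _ i hi a ha b hb).le
    refine ⟨k, G, fun i => (G i).min' (hne i), hGn, hG, fun i => (G i).isLeast_min' (hne i),
      ⟨⟨_, Finset.mem_image_of_mem _ (Finset.mem_univ ⟨0, hk⟩)⟩, ?_⟩, rfl⟩
    refine Finset.forall_mem_image.2 fun i _ => Finset.card_image_le.trans ?_
    simpa using hk_le i _ ((G i).min'_mem (hne i))
  · rintro ⟨k, G, μ, hGn, hG, hμ, ⟨hne, hcard⟩, rfl⟩
    have hmono : StrictMono μ := fun i j hij => hG i j hij _ (hμ i).1 _ (hμ j).1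
    have hk : 0 < k := by
      obtain ⟨i, -⟩ := Finset.image_nonempty.1 hne
      exact i.pos
    have hk_le (i) : k ≤ μ i := by
      simpa [Finset.card_image_of_injective _ hmono.injective] using
        hcard _ (Finset.mem_image_of_mem μ (Finset.mem_univ i))
    exact ⟨k, hk, G, hGn, hG, fun b hb => (hk_le _).trans ((hμ _).2 hb), rfl⟩

theorem familyConvolution_schreier_zero (m : ℕ) :
    familyConvolution (Schreier 0) (Schreier m) = Schreier m := by
  ext F
  constructor
  · rintro ⟨_, ⟨a, -, rfl⟩, -, hFa, hblock⟩
    have ha : a ∈ lowerBounds (F : Set ℕ) := fun x hx => by simpa using hFa hx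
    simpa [block_singleton ha] using hblock
  · intro hF
    have hleast := F.isLeast_min' (nonempty_of_mem_schreier hF)
    refine ⟨_, ⟨_, pos_of_mem_schreier hF hleast.1, rfl⟩, Finset.singleton_subset_iff.2 hleast.1,
      fun x hx => ⟨_, Finset.mem_singleton_self _, hleast.2 hx⟩, fun a ha => ?_⟩
    rwa [Finset.mem_singleton.1 ha, block_singleton hleast.2]

theorem schreier_add (n m : ℕ) :
    Schreier (n + m) = familyConvolution (Schreier n) (Schreier m) := by
  induction n with
  | zero => rw [Nat.zero_add, familyConvolution_schreier_zero]
  | succ n ih =>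
    rw [Nat.add_right_comm, schreier_succ, ih, ← familyConvolution_assoc, ← schreier_succ]

end Schreier

/-- `S_n * S_m = S_{n+m}`: a finite set `F` belongs to `S_{n+m}` iff
`F = F₁ ∪ ⋯ ∪ F_k` with `F₁ < ⋯ < F_k`, each `F_j ∈ S_m`, and the set of
minima `{min F_j : j = 1,…,k}` belongs to `S_n`.  (Here `μ j` records the
minimum of `F_j`.) -/
theorem schreier_convolution (n m : ℕ) (F : Finset ℕ) :
    F ∈ Schreier (n + m) ↔
      ∃ (k : ℕ) (_ : 0 < k) (G : Fin k → Finset ℕ) (μ : Fin k → ℕ),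
        (∀ i, G i ∈ Schreier m) ∧
        (∀ i j : Fin k, i < j → ∀ a ∈ G i, ∀ b ∈ G j, a < b) ∧
        (∀ i, μ i ∈ G i ∧ ∀ b ∈ G i, μ i ≤ b) ∧
        Finset.image μ Finset.univ ∈ Schreier n ∧
        F = Finset.univ.biUnion G := by
  rw [schreier_add, mem_familyConvolution_iff_exists_fin]
  constructor
  · rintro ⟨k, G, μ, hG, hlt, hμ, hM, hF⟩
    obtain ⟨i, -⟩ := Finset.image_nonempty.1 (nonempty_of_mem_schreier hM)
    exact ⟨k, i.pos, G, μ, hG, hlt, hμ, hM, hF⟩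
  · rintro ⟨k, -, G, μ, hG, hlt, hμ, hM, hF⟩
    exact ⟨k, G, μ, hG, hlt, hμ, hM, hF⟩
end

section
/- For every infinite set M of positive integers, every natural number n ≥ 1, and every ε > 0, there exist a finite set F ⊆ M with F ∈ S_n and nonnegative reals (c_k)_{k∈F} with ∑_{k∈F} c_k = 1, such that for every subset G ⊆ F with G ∈ S_{n−1} one has ∑_{k∈G} c_k < ε. (In other words, the vector ∑_{k∈F} c_k e_k is an (n,ε) basic special convex combination supported in M.) -/
/-!
An `(n + 1, ε)` combination is the average of `k > 2 / ε` successive weights `w₀ < w₁ < ⋯` supported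
in `S_n`-sets beyond `k`, so that the union of the supports lies in `S_{n+1}`. Let `G ∈ S_n` and let
`wᵢ` be the first of these weights that charges `G`; it contributes at most `1 / k` to the average.
By the time a later `wⱼ` is chosen, a bound `l` on the preceding supports is known, and `G` contains
some `a ≤ l`. If `n = 0` then `G = {a}`, which `wⱼ` does not charge. Otherwise `G` is a union of at
most `a ≤ l` sets of `S_{n-1}`, so it suffices to take for `wⱼ` an `(n, ε')` combination with
`l * ε' ≤ ε / 2`.
-/

open Finset Function
open Convexity (StdSimplex iConvexComb)

lemma sum_range_le_add_nsmul_of_le_after_ne_zero {A : Type*} [AddCommMonoid A] [PartialOrder A]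
    [IsOrderedAddMonoid A] {s : ℕ → A} {C δ : A} (hC : 0 ≤ C) (hδ : 0 ≤ δ) (hsC : ∀ i, s i ≤ C)
    (hsδ : ∀ i j, i < j → s i ≠ 0 → s j ≤ δ) (k : ℕ) :
    ∑ i ∈ range k, s i ≤ C + k • δ := by
  induction k with
  | zero => simpa using hC
  | succ k ih =>
    rw [sum_range_succ]
    by_cases hzero : ∀ i < k, s i = 0
    · rw [sum_eq_zero fun i hi ↦ hzero i (mem_range.mp hi), zero_add]
      exact (hsC k).trans (le_add_of_nonneg_right (nsmul_nonneg hδ _))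
    · push Not at hzero
      obtain ⟨i, hik, hi⟩ := hzero
      rw [succ_nsmul, ← add_assoc]
      exact add_le_add ih (hsδ i k hik hi)

lemma exists_monotone_seq_subset_Ioc {α : Type*} [Preorder α] [IsDirectedOrder α]
    {u : α → Finset α} (hu : ∀ l, ↑(u l) ⊆ Set.Ioi l) (l₀ : α) :
    ∃ L : ℕ → α, L 0 = l₀ ∧ Monotone L ∧ ∀ i, ↑(u (L i)) ⊆ Set.Ioc (L i) (L (i + 1)) := by
  classical
  have : Nonempty α := ⟨l₀⟩
  choose next hnext using fun l ↦ (insert l (u l)).exists_le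
  refine ⟨fun i ↦ next^[i] l₀, rfl, fun i j hij ↦ ?_, fun i a ha ↦ ⟨hu _ ha, ?_⟩⟩
  · exact monotone_iterate_of_id_le (fun l ↦ hnext l l (mem_insert_self _ _)) hij l₀
  · simpa only [iterate_succ_apply'] using hnext _ a (mem_insert_of_mem ha)

lemma sum_weights_le_one {R X : Type*} [AddCommMonoid R] [One R] [PartialOrder R]
    [IsOrderedAddMonoid R] (w : StdSimplex R X) (G : Finset X) : ∑ a ∈ G, w.weights a ≤ 1 := by
  classical
  calc ∑ a ∈ G, w.weights a ≤ ∑ a ∈ w.weights.support ∪ G, w.weights a :=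
        sum_le_sum_of_subset_of_nonneg subset_union_right fun a _ _ ↦ w.nonneg a
    _ = w.weights.sum fun _ r ↦ r :=
        (w.weights.sum_of_support_subset subset_union_left (fun _ r ↦ r) fun _ _ ↦ rfl).symm
    _ = 1 := w.total

section UniformWeight

variable {K ι X : Type*} [Semifield K] [LinearOrder K] [IsStrictOrderedRing K]

variable (K) in
/-- The uniform probability distribution on a nonempty finite set, used to average weights. -/
noncomputable def uniformWeight (s : Finset ι) (hs : s.Nonempty) : StdSimplex K ι where
  weights := Finsupp.indicator s fun _ _ ↦ (#s : K)⁻¹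
  nonneg i := by
    classical
    rw [Finsupp.indicator_apply]
    split_ifs <;> simp
  total := by simp [hs.ne_empty]

lemma weights_iConvexComb_uniformWeight {s : Finset ι} (hs : s.Nonempty) (w : ι → StdSimplex K X) :
    (iConvexComb (uniformWeight K s hs) w).weights = (#s : K)⁻¹ • ∑ i ∈ s, (w i).weights := by
  calc (iConvexComb (uniformWeight K s hs) w).weights
      = (uniformWeight K s hs).weights.sum fun i r ↦ r • (w i).weights := by
        simp [iConvexComb, Finsupp.sum_mapDomain_index, add_smul]
    _ = ∑ i ∈ s, (#s : K)⁻¹ • (w i).weights :=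
        Finsupp.sum_indicator_index (fun _ ↦ (#s : K)⁻¹) fun i _ ↦ zero_smul K (w i).weights
    _ = (#s : K)⁻¹ • ∑ i ∈ s, (w i).weights := smul_sum.symm

end UniformWeight

namespace Schreier

variable {n : ℕ} {F : Finset ℕ}

lemma nonempty (hF : F ∈ Schreier n) : F.Nonempty := by
  induction n generalizing F with
  | zero =>
    obtain ⟨a, -, rfl⟩ := hF
    exact singleton_nonempty a
  | succ n ih =>
    obtain ⟨k, hk, G, hG, -, -, rfl⟩ := hF
    exact (ih (hG ⟨0, hk⟩)).mono (subset_biUnion_of_mem G (mem_univ _))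

lemma exists_eq_biUnion_of_mem {a : ℕ} (hF : F ∈ Schreier (n + 1)) (ha : a ∈ F) :
    ∃ k ≤ a, ∃ G : Fin k → Finset ℕ,
      (∀ i, G i ∈ Schreier n) ∧ Pairwise (Disjoint on G) ∧ F = univ.biUnion G := by
  obtain ⟨k, hk, G, hG, hlt, hmin, rfl⟩ := hF
  refine ⟨k, ?_, G, hG, (pairwise_disjoint_on G).mpr fun i j hij ↦ ?_, rfl⟩
  · obtain ⟨j, -, haj⟩ := mem_biUnion.mp ha
    obtain rfl | hj := (show (⟨0, hk⟩ : Fin k) ≤ j from Nat.zero_le _).eq_or_lt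
    · exact hmin a haj
    · obtain ⟨b, hb⟩ := nonempty (hG ⟨0, hk⟩)
      exact (hmin b hb).trans (hlt _ j hj b hb a haj).le
  · exact disjoint_left.mpr fun b hbi hbj ↦ (hlt i j hij b hbi b hbj).false

lemma sum_le_nsmul_of_mem {A : Type*} [AddCommMonoid A] [PartialOrder A] [IsOrderedAddMonoid A]
    {f : ℕ → A} {δ : A} (hδ : 0 ≤ δ) (hf : ∀ G ∈ Schreier n, ∑ b ∈ G, f b ≤ δ)
    {a : ℕ} (hF : F ∈ Schreier (n + 1)) (ha : a ∈ F) : ∑ b ∈ F, f b ≤ a • δ := by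
  obtain ⟨k, hka, G, hG, hdisj, rfl⟩ := exists_eq_biUnion_of_mem hF ha
  calc ∑ b ∈ univ.biUnion G, f b = ∑ i, ∑ b ∈ G i, f b := sum_biUnion (hdisj.set_pairwise _)
    _ ≤ k • δ := by simpa using sum_le_card_nsmul univ _ δ fun i _ ↦ hf _ (hG i)
    _ ≤ a • δ := nsmul_le_nsmul_left hδ hka

lemma biUnion_range_mem_succ {u : ℕ → Finset ℕ} {L : ℕ → ℕ} (hL : Monotone L)
    (hu : ∀ i, u i ∈ Schreier n) (huL : ∀ i, ↑(u i) ⊆ Set.Ioc (L i) (L (i + 1)))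
    {k : ℕ} (hk : 0 < k) (hkL : k ≤ L 0) : (range k).biUnion u ∈ Schreier (n + 1) := by
  refine ⟨k, hk, fun i ↦ u i, fun i ↦ hu i, fun i j hij a ha b hb ↦ ?_,
    fun b hb ↦ hkL.trans (huL 0 hb).1.le, ?_⟩
  · exact ((huL i ha).2.trans (hL (Nat.succ_le_of_lt hij))).trans_lt (huL j hb).1
  · ext a
    simp [Fin.exists_iff]

end Schreier

/-- Coefficients of an `(n, ε)` basic special convex combination, `1 ≤ n`, with `F` the support.
The bound is imposed on all `G ∈ S_{n-1}` rather than on the subsets of `F` only, since the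
induction tests it on sets `G` that start before `F`. -/
structure IsBasicSCC (n : ℕ) (ε : ℝ) (w : StdSimplex ℝ ℕ) : Prop where
  support_mem : w.weights.support ∈ Schreier n
  sum_lt : ∀ G ∈ Schreier (n - 1), ∑ a ∈ G, w.weights a < ε

/-- A weight supported in an `S_n`-set beyond `l` that gives mass at most `δ` to each `S_n`-set
starting at or before `l`: a candidate for the next weight in the averaging step, where `l` bounds
the supports chosen so far. -/
structure IsBlockBeyond (n l : ℕ) (δ : ℝ) (w : StdSimplex ℝ ℕ) : Prop where
  support_mem : w.weights.support ∈ Schreier n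
  support_subset : ↑w.weights.support ⊆ Set.Ioi l
  sum_le : ∀ G ∈ Schreier n, ∀ a ∈ G, a ≤ l → ∑ b ∈ G, w.weights b ≤ δ

lemma isBlockBeyond_single {l m : ℕ} (hlm : l < m) : IsBlockBeyond 0 l 0 (.single m) where
  support_mem := ⟨m, by lia, by simp⟩
  support_subset := by simpa
  sum_le := by
    rintro _ ⟨g, -, rfl⟩ a ha hal
    obtain rfl := mem_singleton.mp ha
    simp [(hal.trans_lt hlm).ne']

lemma IsBlockBeyond.mono {n l : ℕ} {δ δ' : ℝ} {w : StdSimplex ℝ ℕ} (hw : IsBlockBeyond n l δ w)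
    (hδ : δ ≤ δ') : IsBlockBeyond n l δ' w where
  support_mem := hw.support_mem
  support_subset := hw.support_subset
  sum_le G hG a ha hal := (hw.sum_le G hG a ha hal).trans hδ

lemma IsBasicSCC.isBlockBeyond {n l : ℕ} {ε : ℝ} {w : StdSimplex ℝ ℕ} (hε : 0 ≤ ε)
    (hw : IsBasicSCC (n + 1) ε w) (hl : ↑w.weights.support ⊆ Set.Ioi l) :
    IsBlockBeyond (n + 1) l (l * ε) w where
  support_mem := hw.support_mem
  support_subset := hl
  sum_le G hG a ha hal := by
    calc ∑ b ∈ G, w.weights b ≤ a • ε :=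
          Schreier.sum_le_nsmul_of_mem hε (fun H hH ↦ (hw.sum_lt H hH).le) hG ha
      _ ≤ l * ε := by rw [nsmul_eq_mul]; gcongr

section Average

variable {n k : ℕ} {δ : ℝ} {L : ℕ → ℕ} {w : ℕ → StdSimplex ℝ ℕ}

lemma sum_range_sum_weights_le (hδ : 0 ≤ δ) (hL : Monotone L)
    (hw : ∀ i, IsBlockBeyond n (L i) δ (w i))
    (hwL : ∀ i, ↑(w i).weights.support ⊆ Set.Ioc (L i) (L (i + 1)))
    {G : Finset ℕ} (hG : G ∈ Schreier n) :
    ∑ i ∈ range k, ∑ a ∈ G, (w i).weights a ≤ 1 + k * δ := by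
  rw [← nsmul_eq_mul]
  refine sum_range_le_add_nsmul_of_le_after_ne_zero zero_le_one hδ
    (fun i ↦ sum_weights_le_one (w i) G) (fun i j hij hi ↦ ?_) k
  obtain ⟨a, haG, ha⟩ := exists_ne_zero_of_sum_ne_zero hi
  have haL : a ≤ L (i + 1) := (hwL i (Finsupp.mem_support_iff.mpr ha)).2
  exact (hw j).sum_le G hG a haG (haL.trans (hL hij))

lemma support_iConvexComb_uniformWeight_range (hL : Monotone L)
    (hwL : ∀ i, ↑(w i).weights.support ⊆ Set.Ioc (L i) (L (i + 1))) (hk : (range k).Nonempty) :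
    (iConvexComb (uniformWeight ℝ (range k) hk) w).weights.support =
      (range k).biUnion fun i ↦ (w i).weights.support := by
  have hcard : (#(range k) : ℝ)⁻¹ ≠ 0 := by simpa using hk
  rw [weights_iConvexComb_uniformWeight, Finsupp.support_smul_eq hcard,
    Finsupp.support_sum_eq_biUnion _ fun i j hij ↦ ?_]
  exact disjoint_coe.mp ((hL.pairwise_disjoint_on_Ioc_succ hij).mono (hwL i) (hwL j))

lemma isBasicSCC_iConvexComb_uniformWeight {ε : ℝ} (hδ : 0 ≤ δ) (hL : Monotone L)
    (hw : ∀ i, IsBlockBeyond n (L i) δ (w i))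
    (hwL : ∀ i, ↑(w i).weights.support ⊆ Set.Ioc (L i) (L (i + 1)))
    (hk : (range k).Nonempty) (hkL : k ≤ L 0) (hε : (k : ℝ)⁻¹ + δ < ε) :
    IsBasicSCC (n + 1) ε (iConvexComb (uniformWeight ℝ (range k) hk) w) where
  support_mem := by
    rw [support_iConvexComb_uniformWeight_range hL hwL]
    exact Schreier.biUnion_range_mem_succ hL (fun i ↦ (hw i).support_mem) hwL
      (by simpa [Nat.pos_iff_ne_zero] using hk) hkL
  sum_lt G hG := by
    have hk0 : (k : ℝ) ≠ 0 := by simpa using hk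
    calc ∑ a ∈ G, (iConvexComb (uniformWeight ℝ (range k) hk) w).weights a
        = (k : ℝ)⁻¹ * ∑ i ∈ range k, ∑ a ∈ G, (w i).weights a := by
          rw [weights_iConvexComb_uniformWeight, sum_comm, mul_sum]
          simp
      _ ≤ (k : ℝ)⁻¹ * (1 + k * δ) := by
          gcongr
          exact sum_range_sum_weights_le hδ hL hw hwL hG
      _ = (k : ℝ)⁻¹ + δ := by field_simp
      _ < ε := hε

end Average

lemma exists_isBasicSCC_of_isBlockBeyond {M : Set ℕ} {n : ℕ} {ε : ℝ} (hε : 0 < ε)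
    (h : ∀ l, ∃ w, ↑w.weights.support ⊆ M ∧ IsBlockBeyond n l (ε / 2) w) :
    ∃ w, ↑w.weights.support ⊆ M ∧ IsBasicSCC (n + 1) ε w := by
  choose w hwM hw using h
  obtain ⟨k, hk⟩ := exists_nat_one_div_lt (half_pos hε)
  obtain ⟨L, hL0, hL, hwL⟩ :=
    exists_monotone_seq_subset_Ioc (fun l ↦ (hw l).support_subset) (k + 1)
  refine ⟨iConvexComb (uniformWeight ℝ (range (k + 1)) nonempty_range_add_one) fun i ↦ w (L i), ?_,
    isBasicSCC_iConvexComb_uniformWeight (half_pos hε).le hL (fun i ↦ hw (L i)) hwL _ hL0.ge ?_⟩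
  · rw [support_iConvexComb_uniformWeight_range hL hwL, coe_biUnion]
    exact Set.iUnion₂_subset fun i _ ↦ hwM (L i)
  · push_cast
    rw [← one_div]
    linarith

lemma exists_isBasicSCC_succ (n : ℕ) {M : Set ℕ} (hM : M.Infinite) {ε : ℝ} (hε : 0 < ε) :
    ∃ w, ↑w.weights.support ⊆ M ∧ IsBasicSCC (n + 1) ε w := by
  induction n generalizing M ε with
  | zero =>
    refine exists_isBasicSCC_of_isBlockBeyond hε fun l ↦ ?_
    obtain ⟨m, hmM, hlm⟩ := hM.exists_gt l
    exact ⟨.single m, by simpa, (isBlockBeyond_single hlm).mono (half_pos hε).le⟩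
  | succ n ih =>
    refine exists_isBasicSCC_of_isBlockBeyond hε fun l ↦ ?_
    have hMl : (M \ Set.Iic l).Infinite := hM.sdiff (Set.finite_Iic l)
    obtain ⟨w, hwM, hw⟩ := ih hMl (ε := ε / 2 / (l + 1)) (by positivity)
    have hlw : ↑w.weights.support ⊆ Set.Ioi l := fun a ha ↦ Set.mem_Ioi.mpr (not_le.mp (hwM ha).2)
    have hδ : l * (ε / 2 / (l + 1)) ≤ ε / 2 := by
      rw [mul_div_left_comm]
      exact mul_le_of_le_one_right (half_pos hε).le (div_le_one_of_le₀ (by simp) (by positivity))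
    exact ⟨w, hwM.trans Set.sdiff_subset, (hw.isBlockBeyond (by positivity) hlw).mono hδ⟩

/-- For every infinite set `M` of positive integers, every `n ≥ 1` and every
`ε > 0`, there is an `(n, ε)` basic special convex combination supported in
`M`: a set `F ⊆ M` with `F ∈ S_n` and nonnegative coefficients `(c_k)_{k∈F}`
summing to `1` such that `∑_{k∈G} c_k < ε` whenever `G ⊆ F` and
`G ∈ S_{n-1}`. -/
theorem exists_basic_special_convex_combination
    (M : Set ℕ) (hM : M.Infinite) (hMpos : ∀ k ∈ M, 0 < k)
    (n : ℕ) (hn : 1 ≤ n) (ε : ℝ) (hε : 0 < ε) :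
    ∃ (F : Finset ℕ) (c : ℕ → ℝ),
      ↑F ⊆ M ∧ F ∈ Schreier n ∧
      (∀ k ∈ F, 0 ≤ c k) ∧ (∑ k ∈ F, c k = 1) ∧
      ∀ G ⊆ F, G ∈ Schreier (n - 1) → ∑ k ∈ G, c k < ε := by
  obtain ⟨m, rfl⟩ := Nat.exists_eq_add_of_le' hn
  obtain ⟨w, hwM, hw⟩ := exists_isBasicSCC_succ m hM hε
  exact ⟨w.weights.support, w.weights, hwM, hw.support_mem, fun k _ ↦ w.nonneg k, w.total,
    fun G _ hG ↦ hw.sum_lt G hG⟩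
end

section
/- Let x = ∑_{k∈F} c_k e_k be an (n,ε) basic special convex combination (n ≥ 1, ε > 0) and let G ⊆ F. Then the Tsirelson norm satisfies ‖∑_{k∈G} c_k e_k‖_T ≤ (1/2^n) ∑_{k∈G} c_k + ε. -/
/-- The norming set `W_T` of Tsirelson space: the smallest set of finitely
supported functions containing `±e_k` (for `k ≥ 1`) and closed under the
`(1/2, S₁)`-operation: if `f₁ < ⋯ < f_d` have successive supports and
`d ≤ min supp f₁`, then `(1/2)(f₁ + ⋯ + f_d)` belongs to the set. -/
inductive TsirelsonW : (ℕ → ℝ) → Prop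
  | pos (k : ℕ) (hk : 0 < k) : TsirelsonW (fun i => if i = k then 1 else 0)
  | neg (k : ℕ) (hk : 0 < k) : TsirelsonW (fun i => if i = k then -1 else 0)
  | op (d : ℕ) (hd : 0 < d) (f : Fin d → ℕ → ℝ)
      (hf : ∀ j, TsirelsonW (f j))
      (hsucc : ∀ i j : Fin d, i < j →
        ∀ a ∈ Function.support (f i), ∀ b ∈ Function.support (f j), a < b)
      (hmin : ∀ b ∈ Function.support (f ⟨0, hd⟩), d ≤ b) :
      TsirelsonW (fun i => (1 / 2) * ∑ j, f j i)

/-!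
Every `f ∈ W_T` has coordinates of modulus at most `1`, so `|∑ f k * c k|` is at most
`2⁻ⁿ ∑ |c k|` plus the mass that `c` puts on the coordinates where `|f k| > 2⁻ⁿ`. A coordinate of
modulus above `2⁻ⁿ` has been halved fewer than `n` times. Each application of the
`(1/2, S₁)`-operation raises the Schreier complexity of a set of large coordinates by one, hence
the large coordinates form a set in `Schreier (n - 1)`, on which `c` has mass at most `ε`.
-/

open Finset Function

/-- The relation `A₁ < A₂ < ⋯` for a family of sets: `max A i < min A j` whenever `i < j`. It is
phrased elementwise, so empty sets are allowed anywhere in the family. -/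
def Successive {ι α : Type*} [LT ι] [LT α] (A : ι → Set α) : Prop :=
  ∀ i j, i < j → ∀ a ∈ A i, ∀ b ∈ A j, a < b

namespace Successive

variable {ι κ α : Type*} {A B : ι → Set α}

theorem mono [LT ι] [LT α] (hB : Successive B) (hAB : ∀ i, A i ⊆ B i) : Successive A :=
  fun i j hij a ha b hb => hB i j hij a (hAB i ha) b (hAB j hb)

theorem comp_strictMono [Preorder ι] [Preorder κ] [LT α] (hA : Successive A) {e : κ → ι}
    (he : StrictMono e) : Successive (A ∘ e) :=
  fun i j hij => hA (e i) (e j) (he hij)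

theorem pairwise_disjoint [LinearOrder ι] [Preorder α] (hA : Successive A) :
    Pairwise (Disjoint on A) := by
  refine (pairwise_disjoint_on A).2 fun i j hij => Set.disjoint_left.2 fun a hai haj => ?_
  exact lt_irrefl a (hA i j hij a hai a haj)

end Successive

section DisjointSupports

variable {ι α M : Type*} [Fintype ι] [AddCommMonoid M] {f : ι → α → M}

theorem sum_apply_eq_of_mem_support (hf : Pairwise (Disjoint on fun i => support (f i)))
    {j : ι} {a : α} (ha : a ∈ support (f j)) : ∑ i, f i a = f j a := by
  refine Fintype.sum_eq_single j fun i hij => ?_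
  exact notMem_support.1 (Set.disjoint_right.1 (hf hij) ha)

theorem exists_sum_apply_eq [Nonempty ι]
    (hf : Pairwise (Disjoint on fun i => support (f i))) (a : α) :
    ∃ j, ∑ i, f i a = f j a := by
  by_cases h : ∃ j, a ∈ support (f j)
  · exact h.imp fun _ => sum_apply_eq_of_mem_support hf
  · simp only [not_exists, notMem_support] at h
    simp [h]

theorem filter_lt_abs_sum_eq_biUnion {R : Type*} [DecidableEq α] [AddCommGroup R]
    [LinearOrder R] [IsOrderedAddMonoid R] {f : ι → α → R}
    (hf : Pairwise (Disjoint on fun i => support (f i))) {θ : R} (hθ : 0 ≤ θ) (s : Finset α) :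
    {a ∈ s | θ < |∑ i, f i a|} = univ.biUnion fun i => {a ∈ s | θ < |f i a|} := by
  ext a
  simp only [mem_filter, mem_biUnion, mem_univ, true_and, exists_and_left]
  refine and_congr_right fun _ => ⟨fun h => ?_, fun ⟨j, hj⟩ => ?_⟩
  · obtain ⟨j, -, hj⟩ := exists_ne_zero_of_sum_ne_zero (abs_pos.1 (hθ.trans_lt h))
    exact ⟨j, by rwa [← sum_apply_eq_of_mem_support hf hj]⟩
  · have ha : a ∈ support (f j) := abs_pos.1 (hθ.trans_lt hj)
    rwa [sum_apply_eq_of_mem_support hf ha]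

end DisjointSupports

theorem coe_filter_lt_abs_subset_support {α R : Type*} [AddCommGroup R] [LinearOrder R]
    [IsOrderedAddMonoid R] {θ : R} (hθ : 0 ≤ θ) (f : α → R) (s : Finset α) :
    (({a ∈ s | θ < |f a|} : Finset α) : Set α) ⊆ support f :=
  fun _ ha => abs_pos.1 (hθ.trans_lt (mem_filter.1 ha).2)

theorem abs_sum_mul_le_mul_sum_abs_add_sum_filter {ι R : Type*} [Ring R] [LinearOrder R]
    [IsOrderedRing R] (s : Finset ι) {f : ι → R} (c : ι → R) (hf : ∀ i ∈ s, |f i| ≤ 1)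
    {θ : R} (hθ : 0 ≤ θ) :
    |∑ i ∈ s, f i * c i| ≤ θ * ∑ i ∈ s, |c i| + ∑ i ∈ s with θ < |f i|, |c i| := by
  have term_le : ∀ i ∈ s, |f i * c i| ≤ θ * |c i| + if θ < |f i| then |c i| else 0 := by
    intro i hi
    rw [abs_mul]
    split_ifs with h
    · calc |f i| * |c i| ≤ 1 * |c i| := by gcongr; exact hf i hi
        _ ≤ θ * |c i| + |c i| := by rw [one_mul]; exact le_add_of_nonneg_left (by positivity)
    · rw [add_zero]
      gcongr
      exact not_lt.1 h
  calc |∑ i ∈ s, f i * c i| ≤ ∑ i ∈ s, |f i * c i| := abs_sum_le_sum_abs _ _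
    _ ≤ ∑ i ∈ s, (θ * |c i| + if θ < |f i| then |c i| else 0) := sum_le_sum term_le
    _ = θ * ∑ i ∈ s, |c i| + ∑ i ∈ s with θ < |f i|, |c i| := by
      rw [sum_add_distrib, ← mul_sum, ← sum_filter]

namespace Schreier

theorem singleton_mem {k : ℕ} (hk : 0 < k) (n : ℕ) : {k} ∈ Schreier n := by
  induction n with
  | zero => exact ⟨k, hk, rfl⟩
  | succ n ih =>
    refine ⟨1, one_pos, fun _ => {k}, fun _ => ih, fun i j hij => ?_, fun b hb => ?_, by simp⟩
    · exact absurd hij (Subsingleton.elim i j).not_lt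
    · rwa [mem_singleton.1 hb]

theorem mem_of_subset_singleton {k : ℕ} (hk : 0 < k) {H : Finset ℕ} (hH : H.Nonempty)
    (hHk : H ⊆ {k}) {n : ℕ} : H ∈ Schreier n := by
  rw [hH.subset_singleton_iff.1 hHk]
  exact singleton_mem hk n

variable {ι : Type*} [Fintype ι] [LinearOrder ι] {A : ι → Finset ℕ} {n : ℕ}

theorem biUnion_mem_succ [Nonempty ι] (hA : ∀ i, A i ∈ Schreier n)
    (hsucc : Successive fun i => (A i : Set ℕ)) (hcard : ∀ i, ∀ a ∈ A i, Fintype.card ι ≤ a) :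
    univ.biUnion A ∈ Schreier (n + 1) := by
  let e : Fin (Fintype.card ι) ≃o ι := Fintype.orderIsoFinOfCardEq ι rfl
  refine ⟨Fintype.card ι, Fintype.card_pos, A ∘ e, fun i => hA (e i),
    hsucc.comp_strictMono e.strictMono, hcard _, ?_⟩
  ext a
  simp [e.surjective.exists]

theorem biUnion_mem_succ_of_nonempty (hne : (univ.biUnion A).Nonempty)
    (hA : ∀ i, (A i).Nonempty → A i ∈ Schreier n)
    (hsucc : Successive fun i => (A i : Set ℕ)) (hcard : ∀ i, ∀ a ∈ A i, Fintype.card ι ≤ a) :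
    univ.biUnion A ∈ Schreier (n + 1) := by
  let J := {i : ι // (A i).Nonempty}
  have : Nonempty J := by
    obtain ⟨i, -, hi⟩ := biUnion_nonempty.1 hne
    exact ⟨i, hi⟩
  have union_eq : univ.biUnion A = univ.biUnion fun i : J => A i := by
    ext a
    simpa [J] using exists_congr fun i => (and_iff_right_of_imp fun h => ⟨a, h⟩).symm
  rw [union_eq]
  exact biUnion_mem_succ (fun i => hA i i.2)
    (hsucc.comp_strictMono (Subtype.strictMono_coe _))
    fun i a ha => (Fintype.card_subtype_le _).trans (hcard i a ha)

end Schreier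

namespace TsirelsonW

variable {f : ℕ → ℝ}

theorem support_nonempty (hf : TsirelsonW f) : (support f).Nonempty := by
  induction hf with
  | pos k _ | neg k _ => exact ⟨k, by simp⟩
  | op d hd f _ hsucc _ ih =>
    obtain ⟨k, hk⟩ := ih ⟨0, hd⟩
    have hsum := sum_apply_eq_of_mem_support (Successive.pairwise_disjoint hsucc) hk
    exact ⟨k, by simpa [hsum] using hk⟩

theorem abs_le_one (hf : TsirelsonW f) (k : ℕ) : |f k| ≤ 1 := by
  induction hf with
  | pos l _ | neg l _ => dsimp only; split_ifs <;> simp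
  | op d hd f _ hsucc _ ih =>
    have : NeZero d := ⟨hd.ne'⟩
    obtain ⟨j, hj⟩ := exists_sum_apply_eq (Successive.pairwise_disjoint hsucc) k
    have := ih j
    simp only [hj, abs_mul, abs_of_pos (one_half_pos (α := ℝ))]
    linarith

theorem le_of_mem_support_of_successive {d : ℕ} (hd : 0 < d) {f : Fin d → ℕ → ℝ}
    (hf : TsirelsonW (f ⟨0, hd⟩)) (hsucc : Successive fun j => support (f j))
    (hmin : ∀ b ∈ support (f ⟨0, hd⟩), d ≤ b) (j : Fin d) {k : ℕ} (hk : k ∈ support (f j)) :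
    d ≤ k := by
  rcases (show (⟨0, hd⟩ : Fin d) ≤ j from Nat.zero_le _).eq_or_lt with rfl | hj
  · exact hmin k hk
  · obtain ⟨a, ha⟩ := hf.support_nonempty
    exact (hmin a ha).trans (hsucc _ j hj a ha k hk).le

theorem filter_lt_abs_mem_schreier (hf : TsirelsonW f) (m : ℕ) {s : Finset ℕ}
    (hs : {k ∈ s | 1 / 2 ^ (m + 1) < |f k|}.Nonempty) :
    {k ∈ s | 1 / 2 ^ (m + 1) < |f k|} ∈ Schreier m := by
  have threshold_nonneg (m : ℕ) : (0 : ℝ) ≤ 1 / 2 ^ m := by positivity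
  induction hf generalizing m with
  | pos l hl | neg l hl =>
    refine Schreier.mem_of_subset_singleton hl hs fun k hk => mem_singleton.2 ?_
    by_contra hkl
    simpa [hkl] using coe_filter_lt_abs_subset_support (threshold_nonneg _) _ s hk
  | op d hd f hf hsucc hmin ih =>
    have lt_abs_half (x : ℝ) : 1 / 2 ^ (m + 1) < |1 / 2 * x| ↔ 1 / 2 ^ m < |x| := by
      rw [pow_succ', ← one_div_mul_one_div, abs_mul, abs_of_pos one_half_pos,
        mul_lt_mul_iff_right₀ one_half_pos]
    simp only [lt_abs_half, filter_lt_abs_sum_eq_biUnion (Successive.pairwise_disjoint hsucc)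
      (threshold_nonneg _)] at hs ⊢
    cases m with
    | zero =>
      obtain ⟨j, -, k, hk⟩ := biUnion_nonempty.1 hs
      have large : 1 < |f j k| := by simpa using (mem_filter.1 hk).2
      exact absurd ((hf j).abs_le_one k) large.not_ge
    | succ m =>
      have subset_support (j : Fin d) :=
        coe_filter_lt_abs_subset_support (threshold_nonneg (m + 1)) (f j) s
      refine Schreier.biUnion_mem_succ_of_nonempty hs (fun j => ih j m)
        (Successive.mono hsucc subset_support) fun j k hk => ?_
      rw [Fintype.card_fin]
      exact le_of_mem_support_of_successive hd (hf _) hsucc hmin j (subset_support j hk)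

end TsirelsonW

theorem tsirelson_norm_scc_estimate_general {m : ℕ} {ε : ℝ} (hε : 0 ≤ ε) {G : Finset ℕ}
    {c : ℕ → ℝ} (hc : ∀ H ⊆ G, H ∈ Schreier m → ∑ k ∈ H, |c k| ≤ ε) {f : ℕ → ℝ}
    (hf : TsirelsonW f) :
    |∑ k ∈ G, f k * c k| ≤ 1 / 2 ^ (m + 1) * ∑ k ∈ G, |c k| + ε := by
  have large_le : ∑ k ∈ G with 1 / 2 ^ (m + 1) < |f k|, |c k| ≤ ε := by
    rcases {k ∈ G | 1 / 2 ^ (m + 1) < |f k|}.eq_empty_or_nonempty with h | h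
    · rwa [h, sum_empty]
    · exact hc _ (filter_subset _ _) (hf.filter_lt_abs_mem_schreier m h)
  calc |∑ k ∈ G, f k * c k|
      ≤ 1 / 2 ^ (m + 1) * ∑ k ∈ G, |c k| + ∑ k ∈ G with 1 / 2 ^ (m + 1) < |f k|, |c k| :=
        abs_sum_mul_le_mul_sum_abs_add_sum_filter G c (fun k _ => hf.abs_le_one k)
          (by positivity)
    _ ≤ 1 / 2 ^ (m + 1) * ∑ k ∈ G, |c k| + ε := by gcongr

/-- If `x = ∑_{k∈F} c_k e_k` is an `(n, ε)` basic special convex combination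
and `G ⊆ F`, then the Tsirelson norm of `∑_{k∈G} c_k e_k`, i.e. the supremum
of `f(∑_{k∈G} c_k e_k)` over `f` in the norming set `W_T`, is at most
`(1/2^n) ∑_{k∈G} c_k + ε`. -/
theorem tsirelson_norm_scc_estimate
    (n : ℕ) (hn : 1 ≤ n) (ε : ℝ) (hε : 0 < ε)
    (F : Finset ℕ) (c : ℕ → ℝ)
    (hF : F ∈ Schreier n)
    (hc : ∀ k ∈ F, 0 ≤ c k) (hsum : ∑ k ∈ F, c k = 1)
    (hscc : ∀ H ⊆ F, H ∈ Schreier (n - 1) → ∑ k ∈ H, c k < ε)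
    (G : Finset ℕ) (hG : G ⊆ F) :
    ∀ f : ℕ → ℝ, TsirelsonW f →
      ∑ k ∈ G, f k * c k ≤ (1 / 2 ^ n) * ∑ k ∈ G, c k + ε := by
  intro f hf
  have sum_abs {H : Finset ℕ} (hH : H ⊆ F) : ∑ k ∈ H, |c k| = ∑ k ∈ H, c k :=
    sum_congr rfl fun k hk => abs_of_nonneg (hc k (hH hk))
  have := tsirelson_norm_scc_estimate_general hε.le (fun H hHG hH =>
    (sum_abs (hHG.trans hG)).trans_le (hscc H (hHG.trans hG) hH).le) hf
  rw [Nat.sub_add_cancel hn, sum_abs hG] at this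
  exact le_of_abs_le this
end

section
/- Let X be a real Banach space, let 1 < q < ∞ and let q′ be its conjugate exponent (1/q + 1/q′ = 1). Let (x_k)_{k≥1} be a sequence in X such that for every n ≥ 1, all positive integers n ≤ k_1 < ... < k_n, and all reals c_1,...,c_n, one has ‖∑_{i=1}^n c_i x_{k_i}‖ ≤ (∑_{i=1}^n |c_i|^q)^{1/q}. Then for every x* ∈ X* with ‖x*‖ ≤ 1 and every j ≥ 1, the set B_j = {k ≥ 1 : 1/2^{j+1} < |x*(x_k)| ≤ 1/2^j} satisfies #B_j ≤ ⌈(4·2^{j+1})^{q′}⌉. -/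
/-!
Any finite set `F` of positive integers contains a Schreier set `T` (one with `#T ≤ min T`) with
`#F ≤ 2 #T`: its `⌈#F / 2⌉` largest elements will do. If moreover `ε ≤ |f (x k)|` on `T`, choosing
unimodular coefficients `c k` with `c k * f (x k) = |f (x k)|` in the upper estimate gives
`#T * ε ≤ ‖f‖ * #T ^ (1 / q)`, that is, `#T ≤ (‖f‖ / ε) ^ q'`.
-/

open Finset

/-- Schreier sets: finite sets of natural numbers that are empty or have at most as many elements
as their minimum. Phrased elementwise so as to cover the empty set uniformly. -/
def IsSchreier (S : Finset ℕ) : Prop :=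
  ∀ k ∈ S, #S ≤ k

/-- The sequence `x` satisfies an upper `ℓ^q` estimate with constant `1` on Schreier sets. The
coefficients are indexed by all of `ℕ`, but only those with index in `S` matter. -/
def HasSchreierUpperEstimate (𝕜 : Type*) {X : Type*} [NormedField 𝕜] [SeminormedAddCommGroup X]
    [NormedSpace 𝕜 X] (q : ℝ) (x : ℕ → X) : Prop :=
  ∀ S : Finset ℕ, IsSchreier S → ∀ c : ℕ → 𝕜,
    ‖∑ k ∈ S, c k • x k‖ ≤ (∑ k ∈ S, ‖c k‖ ^ q) ^ (1 / q)

theorem sum_orderEmbOfFin {α M : Type*} [LinearOrder α] [AddCommMonoid M] (S : Finset α)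
    (g : α → M) : ∑ i, g (S.orderEmbOfFin rfl i) = ∑ a ∈ S, g a := by
  conv_rhs => rw [← S.map_orderEmbOfFin_univ rfl, sum_map]
  rfl

theorem hasSchreierUpperEstimate_of_strictMono {𝕜 X : Type*} [NormedField 𝕜]
    [SeminormedAddCommGroup X] [NormedSpace 𝕜 X] {q : ℝ} {x : ℕ → X}
    (hx : ∀ (n : ℕ) (k : Fin n → ℕ), StrictMono k → (∀ i, n ≤ k i) →
      ∀ c : Fin n → 𝕜, ‖∑ i, c i • x (k i)‖ ≤ (∑ i, ‖c i‖ ^ q) ^ (1 / q)) :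
    HasSchreierUpperEstimate 𝕜 q x := by
  intro S hS c
  rw [← sum_orderEmbOfFin S fun k ↦ c k • x k, ← sum_orderEmbOfFin S fun k ↦ ‖c k‖ ^ q]
  exact hx #S _ (S.orderEmbOfFin rfl).strictMono (fun i ↦ hS _ (S.orderEmbOfFin_mem rfl i)) _

theorem exists_isSchreier_subset_card_le_two_mul {F : Finset ℕ} (hF : ∀ k ∈ F, 1 ≤ k) :
    ∃ T ⊆ F, IsSchreier T ∧ #F ≤ 2 * #T := by
  set m := (#F + 1) / 2
  have card_small : #{k ∈ F | ¬ m ≤ k} ≤ m - 1 := by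
    have small_subset : {k ∈ F | ¬ m ≤ k} ⊆ Ico 1 m := fun k hk ↦ by
      obtain ⟨hkF, hkm⟩ := mem_filter.mp hk
      exact mem_Ico.mpr ⟨hF k hkF, not_le.mp hkm⟩
    simpa only [Nat.card_Ico] using card_le_card small_subset
  have card_large : m ≤ #{k ∈ F | m ≤ k} := by
    have := card_filter_add_card_filter_not (s := F) (m ≤ ·)
    omega
  obtain ⟨T, hT, hTm⟩ := exists_subset_card_eq card_large
  exact ⟨T, hT.trans (filter_subset _ _), fun k hk ↦ hTm.trans_le (mem_filter.mp (hT hk)).2,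
    by omega⟩

theorem finite_and_ncard_le_of_forall_finset_card_le {α : Type*} {B : Set α} {r : ℝ}
    (h : ∀ F : Finset α, (F : Set α) ⊆ B → (#F : ℝ) ≤ r) : B.Finite ∧ (B.ncard : ℝ) ≤ r := by
  have hB : B.Finite := by
    by_contra hinf
    obtain ⟨F, hFB, hF⟩ := Set.Infinite.exists_subset_card_eq hinf (⌊r⌋₊ + 1)
    have : #F ≤ ⌊r⌋₊ := Nat.le_floor (h F hFB)
    omega
  refine ⟨hB, ?_⟩
  rw [Set.ncard_eq_toFinset_card B hB]
  exact h _ hB.coe_toFinset.subset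

theorem mul_rpow_le_rpow_of_mul_le {a b c p : ℝ} (ha : 1 ≤ a) (hb : 0 ≤ b) (hp : 1 ≤ p)
    (h : a * b ≤ c) : a * b ^ p ≤ c ^ p := by
  calc a * b ^ p ≤ a ^ p * b ^ p := by gcongr; exact Real.self_le_rpow_of_one_le ha hp
    _ = (a * b) ^ p := (Real.mul_rpow (by positivity) hb).symm
    _ ≤ c ^ p := by gcongr

theorem le_div_rpow_of_mul_le_mul_rpow {q q' t a ε : ℝ} (hqq' : q.HolderConjugate q')
    (ht : 0 ≤ t) (ha : 0 ≤ a) (hε : 0 < ε) (h : t * ε ≤ a * t ^ (1 / q)) :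
    t ≤ (a / ε) ^ q' := by
  obtain rfl | ht := ht.eq_or_lt
  · positivity
  have rpow_le : t ^ q'⁻¹ ≤ a / ε := by
    rw [← hqq'.one_sub_inv, Real.rpow_sub ht, Real.rpow_one, div_le_div_iff₀ (by positivity) hε,
      ← one_div]
    exact h
  exact (Real.rpow_inv_le_iff_of_pos ht.le (by positivity) hqq'.symm.pos).mp rpow_le

section

variable {𝕜 X : Type*} [RCLike 𝕜] [SeminormedAddCommGroup X] [NormedSpace 𝕜 X]

theorem sum_norm_apply_le_opNorm_mul {ι : Type*} (S : Finset ι) (x : ι → X) (f : X →L[𝕜] 𝕜)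
    {C : ℝ} (h : ∀ c : ι → 𝕜, (∀ i, ‖c i‖ = 1) → ‖∑ i ∈ S, c i • x i‖ ≤ C) :
    ∑ i ∈ S, ‖f (x i)‖ ≤ ‖f‖ * C := by
  choose c hc hcf using fun i ↦ RCLike.exists_norm_eq_mul_self (f (x i))
  have apply_sum : f (∑ i ∈ S, c i • x i) = ((∑ i ∈ S, ‖f (x i)‖ : ℝ) : 𝕜) := by
    simp only [map_sum, map_smul, smul_eq_mul, ← hcf]
  calc ∑ i ∈ S, ‖f (x i)‖ = ‖f (∑ i ∈ S, c i • x i)‖ := by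
        rw [apply_sum, RCLike.norm_of_nonneg (by positivity)]
    _ ≤ ‖f‖ * ‖∑ i ∈ S, c i • x i‖ := f.le_opNorm _
    _ ≤ ‖f‖ * C := by gcongr; exact h c hc

theorem IsSchreier.card_le_div_rpow {q q' ε : ℝ} {x : ℕ → X} {S : Finset ℕ} (hS : IsSchreier S)
    (hqq' : q.HolderConjugate q') (hx : HasSchreierUpperEstimate 𝕜 q x) (f : X →L[𝕜] 𝕜)
    (hε : 0 < ε) (hf : ∀ k ∈ S, ε ≤ ‖f (x k)‖) : (#S : ℝ) ≤ (‖f‖ / ε) ^ q' := by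
  have norm_sum_le (c : ℕ → 𝕜) (hc : ∀ k, ‖c k‖ = 1) :
      ‖∑ k ∈ S, c k • x k‖ ≤ (#S : ℝ) ^ (1 / q) := by
    simpa only [hc, Real.one_rpow, sum_const, nsmul_one] using hx S hS c
  refine le_div_rpow_of_mul_le_mul_rpow hqq' (by positivity) (by positivity) hε ?_
  calc (#S : ℝ) * ε ≤ ∑ k ∈ S, ‖f (x k)‖ := by
        simpa only [nsmul_eq_mul] using S.card_nsmul_le_sum _ ε hf
    _ ≤ ‖f‖ * (#S : ℝ) ^ (1 / q) := sum_norm_apply_le_opNorm_mul S x f norm_sum_le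

theorem level_set_card_bound_general {q q' ε : ℝ} {x : ℕ → X} {B : Set ℕ}
    (hqq' : q.HolderConjugate q') (hx : HasSchreierUpperEstimate 𝕜 q x) (f : X →L[𝕜] 𝕜)
    (hε : 0 < ε) (hB : ∀ k ∈ B, 1 ≤ k ∧ ε ≤ ‖f (x k)‖) :
    B.Finite ∧ (B.ncard : ℝ) ≤ 2 * (‖f‖ / ε) ^ q' := by
  refine finite_and_ncard_le_of_forall_finset_card_le fun F hFB ↦ ?_
  obtain ⟨T, hTF, hT, hFT⟩ :=
    exists_isSchreier_subset_card_le_two_mul fun k hk ↦ (hB k (hFB hk)).1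
  calc (#F : ℝ) ≤ 2 * #T := mod_cast hFT
    _ ≤ 2 * (‖f‖ / ε) ^ q' := by
        gcongr
        exact hT.card_le_div_rpow hqq' hx f hε fun k hk ↦ (hB k (hFB (hTF hk))).2

end

/-- Let `X` be a real Banach space, `1 < q < ∞` with conjugate exponent `q'`,
and `(x_k)_{k≥1}` a sequence in `X` such that for all `n ≤ k₁ < ⋯ < k_n` and
reals `c₁,…,c_n` one has `‖∑ cᵢ x_{kᵢ}‖ ≤ (∑ |cᵢ|^q)^{1/q}`.  Then for every
norm-one (or smaller) functional `x*` and every `j ≥ 1`, the set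
`B_j = {k ≥ 1 : 1/2^{j+1} < |x*(x_k)| ≤ 1/2^j}` has at most
`⌈(4·2^{j+1})^{q'}⌉` elements. -/
theorem level_set_card_bound
    {X : Type*} [NormedAddCommGroup X] [NormedSpace ℝ X] [CompleteSpace X]
    (q q' : ℝ) (hq : 1 < q) (hq' : 1 / q + 1 / q' = 1)
    (x : ℕ → X)
    (hx : ∀ (n : ℕ) (k : Fin n → ℕ), StrictMono k → (∀ i, n ≤ k i) →
      ∀ c : Fin n → ℝ, ‖∑ i, c i • x (k i)‖ ≤ (∑ i, |c i| ^ q) ^ (1 / q))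
    (f : X →L[ℝ] ℝ) (hf : ‖f‖ ≤ 1) (j : ℕ) (hj : 1 ≤ j) :
    {k : ℕ | 1 ≤ k ∧ 1 / 2 ^ (j + 1) < |f (x k)| ∧ |f (x k)| ≤ 1 / 2 ^ j}.Finite ∧
    {k : ℕ | 1 ≤ k ∧ 1 / 2 ^ (j + 1) < |f (x k)| ∧ |f (x k)| ≤ 1 / 2 ^ j}.ncard ≤
      ⌈(4 * 2 ^ (j + 1) : ℝ) ^ q'⌉₊ := by
  have hqq' : q.HolderConjugate q' :=
    Real.holderConjugate_iff.mpr ⟨hq, by simpa only [one_div] using hq'⟩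
  have two_mul_le : 2 * (‖f‖ / (1 / 2 ^ (j + 1))) ≤ 4 * 2 ^ (j + 1) := by
    rw [div_div_eq_mul_div, div_one, ← mul_assoc]
    gcongr
    linarith
  have two_mul_rpow_le :=
    mul_rpow_le_rpow_of_mul_le one_le_two (by positivity) hqq'.symm.lt.le two_mul_le
  exact And.imp_right
    (fun hcard ↦ Nat.cast_le.mp (hcard.trans (two_mul_rpow_le.trans (Nat.le_ceil _))))
    (level_set_card_bound_general hqq' (hasSchreierUpperEstimate_of_strictMono hx) f
      (by positivity) fun k hk ↦ ⟨hk.1, hk.2.1.le⟩)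
end

section
/- Let X be a real Banach space, 1 < q < ∞ with conjugate exponent q′, and let p > q′. Set t_j = ⌈(4·2^{j+1})^{q′}⌉ for j ≥ 1 and α = 8^{q′/p} ∑_{j=1}^∞ 2^{−(1−q′/p)j} + 1 (a finite quantity since p > q′). Let (x*_k)_{k≥1} be a sequence in X*, (x_k)_{k≥1} a sequence in X with ‖x_k‖ ≤ 1/2 for all k, and C > 0 such that for every n ≥ 1, all n ≤ k_1 < ... < k_n, and all reals c_1,...,c_n: ‖∑_{i=1}^n c_i x*_{k_i}‖ ≤ C(∑_{i=1}^n |c_i|^p)^{1/p} and ‖∑_{i=1}^n c_i x_{k_i}‖ ≤ (∑_{i=1}^n |c_i|^q)^{1/q}. Let (m_j)_{j≥1} be a strictly increasing sequence of positive integers with m_j ≥ t_j for all j. Then for every x ∈ X and every N ≥ 1, ‖∑_{k=1}^N x*_{m_k}(x) x_k‖ ≤ C(α + 1)‖x‖. In particular the partial sums of the series defining the map T x = ∑_{k=1}^∞ x*_{m_k}(x) x_k are uniformly bounded by C(α+1)‖x‖. -/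
/-!
By duality it suffices to bound `∑ f(x_k) x*_{m_k}` uniformly over functionals `f` of norm at most
one. The upper `ℓ_q`-estimate makes `(f(x_k))` weakly `ℓ_{q'}`: at most `t_j` of the coefficients
have modulus at least `2^{-(j+1)}`. Coefficients of modulus at most `2^{-k}` are handled by the
triangle inequality. Any other coefficient with modulus about `2^{-j}` has index `k ≥ j`, so those
of level `j` come with at most `t_j ≤ m_j ≤ m_k` functionals, to which the upper `ℓ_p`-estimate
applies; as `p > q'`, these contributions sum up geometrically over `j`.
-/

/-- The upper half of the statement that `v` generates an `ℓ_r` spreading model: any `n` vectors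
taken from the tail of `v` starting at index `n` satisfy an upper `ℓ_r`-estimate with
constant `D`. -/
def HasUpperEstimate (𝕜 : Type*) {V : Type*} [NormedField 𝕜] [SeminormedAddCommGroup V]
    [NormedSpace 𝕜 V] (r D : ℝ) (v : ℕ → V) : Prop :=
  ∀ (n : ℕ) (k : Fin n → ℕ), StrictMono k → (∀ i, n ≤ k i) →
    ∀ c : Fin n → 𝕜, ‖∑ i, c i • v (k i)‖ ≤ D * (∑ i, ‖c i‖ ^ r) ^ (1 / r)

theorem sum_orderIsoOfFin {α M : Type*} [LinearOrder α] [AddCommMonoid M] (F : Finset α)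
    (g : α → M) : ∑ i, g (F.orderIsoOfFin rfl i) = ∑ k ∈ F, g k :=
  ((F.orderIsoOfFin rfl).toEquiv.sum_comp fun k : F => g k).trans (Finset.sum_coe_sort F g)

theorem sum_half_pow_le_one {s : Finset ℕ} (hs : ∀ k ∈ s, 1 ≤ k) :
    ∑ k ∈ s, (1 / 2 : ℝ) ^ k ≤ 1 := by
  have hs0 : 0 ∉ s := fun h0 => absurd (hs 0 h0) (by norm_num)
  have := sum_le_hasSum (insert 0 s) (fun _ _ => by positivity) hasSum_geometric_two
  rw [Finset.sum_insert hs0, pow_zero] at this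
  linarith

theorem summable_rpow_neg_mul_add_one {b s : ℝ} (hb : 1 < b) (hs : 0 < s) :
    Summable fun j : ℕ => b ^ (-s * ((j : ℝ) + 1)) := by
  have hb0 : 0 < b := by positivity
  have geometric : Summable fun j : ℕ => (b ^ (-s)) ^ j :=
    summable_geometric_of_lt_one (by positivity)
      (Real.rpow_lt_one_of_one_lt_of_neg hb (neg_lt_zero.2 hs))
  refine (geometric.mul_left (b ^ (-s))).congr fun j => ?_
  rw [← pow_succ', ← Real.rpow_mul_natCast hb0.le, Nat.cast_add_one]

theorem sum_Icc_one_le_tsum_add_one {f : ℕ → ℝ} (hf : ∀ j, 0 ≤ f j)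
    (hsum : Summable fun j => f (j + 1)) (N : ℕ) :
    ∑ j ∈ Finset.Icc 1 N, f j ≤ ∑' j, f (j + 1) := by
  rw [← Finset.Ico_add_one_right_eq_Icc, ← Finset.sum_Ico_add' f 0 N 1, ← Finset.range_eq_Ico]
  exact hsum.sum_le_tsum _ fun j _ => hf (j + 1)

theorem le_rpow_of_le_mul_rpow {a b q q' : ℝ} (hqq' : q.HolderConjugate q') (ha : 0 ≤ a)
    (hb : 0 ≤ b) (h : a ≤ b * a ^ (1 / q)) : a ≤ b ^ q' := by
  rcases ha.eq_or_lt with rfl | ha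
  · exact Real.rpow_nonneg hb q'
  have split : a = a ^ (1 / q') * a ^ (1 / q) := by
    rw [← Real.rpow_add ha, one_div, one_div, hqq'.symm.inv_add_inv_eq_one, Real.rpow_one]
  have root_le : a ^ (1 / q') ≤ b :=
    le_of_mul_le_mul_right (split.symm.trans_le h) (Real.rpow_pos_of_pos ha _)
  rwa [one_div, Real.rpow_inv_le_iff_of_pos ha.le hb hqq'.symm.pos] at root_le

theorem level_contribution_eq {p : ℝ} (hp : p ≠ 0) (q' : ℝ) (j : ℕ) :
    ((4 * 2 ^ (j + 1) : ℝ) ^ q') ^ (1 / p) * (1 / 2) ^ j =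
      8 ^ (q' / p) * 2 ^ (-(1 - q' / p) * (j : ℝ)) := by
  have eight : (4 * 2 ^ (j + 1) : ℝ) = 8 * 2 ^ (j : ℝ) := by
    rw [Real.rpow_natCast]; ring
  have half : (1 / 2 : ℝ) ^ j = 2 ^ (-(j : ℝ)) := by
    rw [Real.rpow_neg zero_le_two, Real.rpow_natCast, one_div, inv_pow]
  rw [eight, half, ← Real.rpow_mul (by positivity), Real.mul_rpow (by norm_num) (by positivity),
    ← Real.rpow_mul zero_le_two, mul_assoc, ← Real.rpow_add two_pos]
  congr 2 <;> field_simp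
  ring

theorem sum_level_contributions_le {q' p : ℝ} (hp : 0 < p) (hq'p : q' < p) (N : ℕ) :
    ∑ j ∈ Finset.Icc 1 N, ((4 * 2 ^ (j + 1) : ℝ) ^ q') ^ (1 / p) * (1 / 2) ^ j ≤
      8 ^ (q' / p) * ∑' j : ℕ, (2 : ℝ) ^ (-(1 - q' / p) * ((j : ℝ) + 1)) := by
  have summable := summable_rpow_neg_mul_add_one one_lt_two (sub_pos.2 ((div_lt_one hp).2 hq'p))
  have sum_le := sum_Icc_one_le_tsum_add_one
    (f := fun j => (2 : ℝ) ^ (-(1 - q' / p) * (j : ℝ))) (fun j => by positivity)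
    (by simpa only [Nat.cast_add_one] using summable) N
  simp only [level_contribution_eq hp.ne', ← Finset.mul_sum]
  gcongr
  simpa only [Nat.cast_add_one] using sum_le

/-- `G` can be taken to be the upper half of `F`. -/
theorem exists_subset_card_le_two_mul_card {F : Finset ℕ} (hF : ∀ k ∈ F, 1 ≤ k) :
    ∃ G ⊆ F, F.card ≤ 2 * G.card ∧ ∀ k ∈ G, G.card ≤ k := by
  obtain ⟨h, h_def⟩ : ∃ h, h = (F.card + 1) / 2 := ⟨_, rfl⟩
  have card_low : (F.filter fun k => ¬ h ≤ k).card ≤ h - 1 := by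
    have low_subset : (F.filter fun k => ¬ h ≤ k) ⊆ Finset.Ico 1 h := fun k hk => by
      rw [Finset.mem_filter] at hk
      exact Finset.mem_Ico.2 ⟨hF k hk.1, not_le.1 hk.2⟩
    simpa only [Nat.card_Ico] using Finset.card_le_card low_subset
  have card_high : h ≤ (F.filter fun k => h ≤ k).card := by
    have := Finset.card_filter_add_card_filter_not (s := F) fun k => h ≤ k
    omega
  obtain ⟨G, hG, rfl⟩ := Finset.exists_subset_card_eq card_high
  exact ⟨G, hG.trans (Finset.filter_subset _ _), by omega,
    fun k hk => (Finset.mem_filter.1 (hG hk)).2⟩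

theorem exists_dyadic_level {t : ℝ} {k : ℕ} (ht : t ≤ 1 / 2) (hk : (1 / 2) ^ k < t) :
    ∃ j, 1 ≤ j ∧ j ≤ k ∧ (1 / 2) ^ (j + 1) < t ∧ t ≤ (1 / 2) ^ j := by
  have ht0 : 0 < t := lt_trans (by positivity) hk
  obtain ⟨j, hlt, hle⟩ := exists_nat_pow_near_of_lt_one ht0 (by linarith)
    (one_half_pos (α := ℝ)) one_half_lt_one
  refine ⟨j, ?_, ?_, hlt, hle⟩
  · have := (pow_lt_pow_iff_right_of_lt_one₀ one_half_pos one_half_lt_one).1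
      (hlt.trans_le (ht.trans_eq (pow_one _).symm))
    omega
  · exact ((pow_lt_pow_iff_right_of_lt_one₀ one_half_pos one_half_lt_one).1
      (hk.trans_le hle)).le

theorem norm_sum_smul_le_of_norm_le_half_pow {𝕜 V : Type*} [NormedField 𝕜]
    [SeminormedAddCommGroup V] [NormedSpace 𝕜 V] {a : ℕ → 𝕜} {v : ℕ → V} {D : ℝ} {s : Finset ℕ}
    (hD : 0 ≤ D) (hs : ∀ k ∈ s, 1 ≤ k) (ha : ∀ k ∈ s, ‖a k‖ ≤ (1 / 2) ^ k)
    (hv : ∀ k ∈ s, ‖v k‖ ≤ D) : ‖∑ k ∈ s, a k • v k‖ ≤ D :=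
  calc ‖∑ k ∈ s, a k • v k‖
      ≤ ∑ k ∈ s, (1 / 2) ^ k * D := norm_sum_le_of_le s fun k hk => by
        rw [norm_smul]
        exact mul_le_mul (ha k hk) (hv k hk) (norm_nonneg _) (by positivity)
    _ = (∑ k ∈ s, (1 / 2) ^ k) * D := (Finset.sum_mul ..).symm
    _ ≤ D := mul_le_of_le_one_left hD (sum_half_pow_le_one hs)

theorem norm_sum_apply_smul_le_of_dual {𝕜 X Y : Type*} [RCLike 𝕜] [SeminormedAddCommGroup X]
    [NormedSpace 𝕜 X] [NormedAddCommGroup Y] [NormedSpace 𝕜 Y] {ι : Type*} {s : Finset ι}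
    {φ : ι → X →L[𝕜] 𝕜} {y : ι → Y} {M : ℝ}
    (h : ∀ f : Y →L[𝕜] 𝕜, ‖f‖ ≤ 1 → ‖∑ k ∈ s, f (y k) • φ k‖ ≤ M) (z : X) :
    ‖∑ k ∈ s, φ k z • y k‖ ≤ M * ‖z‖ := by
  obtain ⟨f, hf, hfz⟩ := exists_dual_vector'' 𝕜 (∑ k ∈ s, φ k z • y k)
  have transpose : f (∑ k ∈ s, φ k z • y k) = (∑ k ∈ s, f (y k) • φ k) z := by
    simp only [map_sum, map_smul, smul_eq_mul, sum_apply, smul_apply, mul_comm]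
  calc ‖∑ k ∈ s, φ k z • y k‖
      = ‖(∑ k ∈ s, f (y k) • φ k) z‖ := by
        rw [← transpose, hfz, RCLike.norm_ofReal, abs_norm]
    _ ≤ M * ‖z‖ := ContinuousLinearMap.le_of_opNorm_le _ (h f hf) z

namespace HasUpperEstimate

section NormedField

variable {𝕜 V : Type*} [NormedField 𝕜] [SeminormedAddCommGroup V] [NormedSpace 𝕜 V]
  {r D : ℝ} {v : ℕ → V} {m : ℕ → ℕ}

theorem norm_le (hv : HasUpperEstimate 𝕜 r D v) {k : ℕ} (hk : 1 ≤ k) : ‖v k‖ ≤ D := by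
  simpa using hv 1 (fun _ => k) (Subsingleton.strictMono _) (fun _ => hk) fun _ => 1

theorem const_nonneg (hv : HasUpperEstimate 𝕜 r D v) : 0 ≤ D :=
  (norm_nonneg (v 1)).trans (hv.norm_le le_rfl)

theorem norm_sum_le (hv : HasUpperEstimate 𝕜 r D v) {F : Finset ℕ} (hm : StrictMonoOn m F)
    (hF : ∀ k ∈ F, F.card ≤ m k) (c : ℕ → 𝕜) :
    ‖∑ k ∈ F, c k • v (m k)‖ ≤ D * (∑ k ∈ F, ‖c k‖ ^ r) ^ (1 / r) := by
  let e := F.orderIsoOfFin rfl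
  have h := hv F.card (fun i => m (e i)) (fun i j hij => hm (e i).2 (e j).2 (e.strictMono hij))
    (fun i => hF _ (e i).2) fun i => c (e i)
  rwa [sum_orderIsoOfFin F fun k => c k • v (m k), sum_orderIsoOfFin F fun k => ‖c k‖ ^ r] at h

theorem norm_sum_le_of_norm_le (hv : HasUpperEstimate 𝕜 r D v) (hr : 0 < r) {F : Finset ℕ}
    (hm : StrictMonoOn m F) (hF : ∀ k ∈ F, F.card ≤ m k) {c : ℕ → 𝕜} {b : ℝ} (hb : 0 ≤ b)
    (hc : ∀ k ∈ F, ‖c k‖ ≤ b) :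
    ‖∑ k ∈ F, c k • v (m k)‖ ≤ D * ((F.card : ℝ) ^ (1 / r) * b) := by
  have hD := hv.const_nonneg
  calc ‖∑ k ∈ F, c k • v (m k)‖
      ≤ D * (∑ k ∈ F, ‖c k‖ ^ r) ^ (1 / r) := hv.norm_sum_le hm hF c
    _ ≤ D * (∑ _k ∈ F, b ^ r) ^ (1 / r) := by
        gcongr with k hk
        exact hc k hk
    _ = D * ((F.card : ℝ) ^ (1 / r) * b) := by
        rw [Finset.sum_const, nsmul_eq_mul, Real.mul_rpow (by positivity) (by positivity),
          one_div, Real.rpow_rpow_inv hb hr.ne']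

/-- The dyadic level `j` of `a k` is at most `k`, so each level set has at most
`t j ≤ m j ≤ m k` elements and the upper estimate applies to it. -/
theorem norm_sum_le_of_half_pow_lt (hv : HasUpperEstimate 𝕜 r D v) (hr : 0 < r)
    (hm : StrictMonoOn m (Set.Ici 1)) {t : ℕ → ℝ} (htm : ∀ j, 1 ≤ j → t j ≤ m j) {a : ℕ → 𝕜}
    {N : ℕ} {s : Finset ℕ} (hsN : s ⊆ Finset.Icc 1 N) (ha : ∀ k ∈ s, ‖a k‖ ≤ 1 / 2)
    (ha_large : ∀ k ∈ s, (1 / 2) ^ k < ‖a k‖)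
    (hcard : ∀ j, 1 ≤ j → ∀ F ⊆ s, (∀ k ∈ F, (1 / 2) ^ (j + 1) ≤ ‖a k‖) → (F.card : ℝ) ≤ t j) :
    ‖∑ k ∈ s, a k • v (m k)‖ ≤ D * ∑ j ∈ Finset.Icc 1 N, t j ^ (1 / r) * (1 / 2) ^ j := by
  have hD := hv.const_nonneg
  choose! level one_le_level level_le lt_norm norm_le using
    fun k hk => exists_dyadic_level (ha k hk) (ha_large k hk)
  have hs : ∀ k ∈ s, 1 ≤ k ∧ k ≤ N := fun k hk => Finset.mem_Icc.1 (hsN hk)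
  have norm_level_le : ∀ j ∈ Finset.Icc 1 N,
      ‖∑ k ∈ s with level k = j, a k • v (m k)‖ ≤ D * (t j ^ (1 / r) * (1 / 2) ^ j) := by
    intro j hj
    have hj1 : 1 ≤ j := (Finset.mem_Icc.1 hj).1
    have mem_level {k} (hk : k ∈ s.filter (level · = j)) : k ∈ s ∧ level k = j :=
      Finset.mem_filter.1 hk
    have card_le : ((s.filter (level · = j)).card : ℝ) ≤ t j :=
      hcard j hj1 _ (Finset.filter_subset _ _) fun k hk => by
        obtain ⟨hks, rfl⟩ := mem_level hk
        exact (lt_norm k hks).le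
    have card_le_index : ∀ k ∈ s.filter (level · = j), (s.filter (level · = j)).card ≤ m k := by
      intro k hk
      obtain ⟨hks, hkj⟩ := mem_level hk
      have hjk : j ≤ k := hkj ▸ level_le k hks
      exact (Nat.cast_le.1 (card_le.trans (htm j hj1))).trans
        (hm.monotoneOn hj1 (hs k hks).1 hjk)
    refine (hv.norm_sum_le_of_norm_le hr (hm.mono fun k hk => (hs k (mem_level hk).1).1)
      card_le_index (b := (1 / 2) ^ j) (by positivity) fun k hk => ?_).trans (by gcongr)
    obtain ⟨hks, rfl⟩ := mem_level hk
    exact norm_le k hks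
  rw [Finset.mul_sum, ← Finset.sum_fiberwise_of_maps_to (g := level) (t := Finset.Icc 1 N)
    fun k hk => Finset.mem_Icc.2 ⟨one_le_level k hk, (level_le k hk).trans (hs k hk).2⟩]
  exact norm_sum_le_of_le _ norm_level_le

theorem norm_sum_le_of_card_level_le (hv : HasUpperEstimate 𝕜 r D v) (hr : 0 < r)
    (hm : StrictMonoOn m (Set.Ici 1)) (hm_pos : ∀ k, 1 ≤ k → 1 ≤ m k)
    {t : ℕ → ℝ} (htm : ∀ j, 1 ≤ j → t j ≤ m j) {a : ℕ → 𝕜} (ha : ∀ k, 1 ≤ k → ‖a k‖ ≤ 1 / 2)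
    (hcard : ∀ j, 1 ≤ j → ∀ F : Finset ℕ, (∀ k ∈ F, 1 ≤ k) →
      (∀ k ∈ F, (1 / 2) ^ (j + 1) ≤ ‖a k‖) → (F.card : ℝ) ≤ t j) (N : ℕ) :
    ‖∑ k ∈ Finset.Icc 1 N, a k • v (m k)‖ ≤
      D * (∑ j ∈ Finset.Icc 1 N, t j ^ (1 / r) * (1 / 2) ^ j + 1) := by
  set s := Finset.Icc 1 N
  have hs {P : ℕ → Prop} [DecidablePred P] {k} (hk : k ∈ s.filter P) : 1 ≤ k :=
    (Finset.mem_Icc.1 (Finset.mem_filter.1 hk).1).1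
  have large := hv.norm_sum_le_of_half_pow_lt hr hm htm
    (s := s.filter fun k => ¬ ‖a k‖ ≤ (1 / 2) ^ k) (Finset.filter_subset _ _)
    (fun k hk => ha k (hs hk)) (fun k hk => not_le.1 (Finset.mem_filter.1 hk).2)
    (fun j hj F hF => hcard j hj F fun k hk => hs (hF hk))
  have small : ‖∑ k ∈ s with ‖a k‖ ≤ (1 / 2) ^ k, a k • v (m k)‖ ≤ D :=
    norm_sum_smul_le_of_norm_le_half_pow hv.const_nonneg (fun k => hs)
      (fun k hk => (Finset.mem_filter.1 hk).2) fun k hk => hv.norm_le (hm_pos k (hs hk))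
  rw [mul_add_one, add_comm,
    ← Finset.sum_filter_add_sum_filter_not s fun k => ‖a k‖ ≤ (1 / 2) ^ k]
  exact norm_add_le_of_le small large

end NormedField

section RCLike

variable {𝕜 V : Type*} [RCLike 𝕜] [SeminormedAddCommGroup V] [NormedSpace 𝕜 V]
  {r D : ℝ} {v : ℕ → V}

theorem sum_norm_apply_le (hv : HasUpperEstimate 𝕜 r D v) (hr : 0 < r) (f : V →L[𝕜] 𝕜)
    {G : Finset ℕ} (hG : ∀ k ∈ G, G.card ≤ k) :
    ∑ k ∈ G, ‖f (v k)‖ ≤ ‖f‖ * D * (G.card : ℝ) ^ (1 / r) := by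
  choose c norm_c norm_apply using fun k => RCLike.exists_norm_eq_mul_self (f (v k))
  have sum_eq : ((∑ k ∈ G, ‖f (v k)‖ : ℝ) : 𝕜) = f (∑ k ∈ G, c k • v k) := by
    simp only [norm_apply, map_sum, map_smul, smul_eq_mul]
  calc ∑ k ∈ G, ‖f (v k)‖
      = ‖f (∑ k ∈ G, c k • v k)‖ := by
        rw [← sum_eq, RCLike.norm_of_nonneg (Finset.sum_nonneg fun _ _ => norm_nonneg _)]
    _ ≤ ‖f‖ * ‖∑ k ∈ G, c k • v k‖ := f.le_opNorm _
    _ ≤ ‖f‖ * (D * ((G.card : ℝ) ^ (1 / r) * 1)) := by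
        gcongr
        exact hv.norm_sum_le_of_norm_le hr (strictMono_id.strictMonoOn _) hG zero_le_one
          fun k _ => (norm_c k).le
    _ = ‖f‖ * D * (G.card : ℝ) ^ (1 / r) := by rw [mul_one, mul_assoc]

theorem card_le_of_le_norm_apply {q q' : ℝ} (hv : HasUpperEstimate 𝕜 q D v)
    (hqq' : q.HolderConjugate q') (f : V →L[𝕜] 𝕜) {δ : ℝ} (hδ : 0 < δ) {F : Finset ℕ}
    (hF : ∀ k ∈ F, 1 ≤ k) (hδF : ∀ k ∈ F, δ ≤ ‖f (v k)‖) :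
    (F.card : ℝ) ≤ (2 * (‖f‖ * D / δ)) ^ q' := by
  have hD := hv.const_nonneg
  obtain ⟨G, hGF, hFG, hG⟩ := exists_subset_card_le_two_mul_card hF
  have card_mul_le : G.card * δ ≤ ‖f‖ * D * (G.card : ℝ) ^ (1 / q) :=
    calc G.card * δ = ∑ _k ∈ G, δ := by rw [Finset.sum_const, nsmul_eq_mul]
      _ ≤ ∑ k ∈ G, ‖f (v k)‖ := Finset.sum_le_sum fun k hk => hδF k (hGF hk)
      _ ≤ _ := hv.sum_norm_apply_le hqq'.pos f hG
  have card_le : (G.card : ℝ) ≤ (‖f‖ * D / δ) ^ q' := by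
    refine le_rpow_of_le_mul_rpow hqq' (Nat.cast_nonneg _) (by positivity) ?_
    rwa [div_mul_eq_mul_div, le_div_iff₀ hδ]
  calc (F.card : ℝ) ≤ 2 * G.card := mod_cast hFG
    _ ≤ 2 ^ q' * (‖f‖ * D / δ) ^ q' := by
        gcongr
        exact Real.self_le_rpow_of_one_le one_le_two hqq'.symm.lt.le
    _ = _ := (Real.mul_rpow zero_le_two (by positivity)).symm

end RCLike

end HasUpperEstimate

theorem partial_sums_uniformly_bounded_general
    {𝕜 X Y : Type*} [RCLike 𝕜] [SeminormedAddCommGroup X] [NormedSpace 𝕜 X]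
    [NormedAddCommGroup Y] [NormedSpace 𝕜 Y] {q q' p C : ℝ} (hqq' : q.HolderConjugate q')
    (hp : q' < p) {xs : ℕ → X →L[𝕜] 𝕜} {x : ℕ → Y} (hxnorm : ∀ k, 1 ≤ k → ‖x k‖ ≤ 1 / 2)
    (hxs : HasUpperEstimate 𝕜 p C xs) (hx : HasUpperEstimate 𝕜 q 1 x) {m : ℕ → ℕ}
    (hmono : ∀ j, 1 ≤ j → m j < m (j + 1))
    (hmt : ∀ j, 1 ≤ j → ⌈(4 * 2 ^ (j + 1) : ℝ) ^ q'⌉₊ ≤ m j) (z : X) (N : ℕ) :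
    ‖∑ k ∈ Finset.Icc 1 N, xs (m k) z • x k‖ ≤
      C * ((8 : ℝ) ^ (q' / p) *
        (∑' j : ℕ, (2 : ℝ) ^ (-(1 - q' / p) * ((j : ℝ) + 1))) + 1) * ‖z‖ := by
  have hp0 : 0 < p := hqq'.symm.pos.trans hp
  have hm : StrictMonoOn m (Set.Ici 1) :=
    strictMonoOn_of_lt_add_one Set.ordConnected_Ici fun j _ hj _ => hmono j hj
  have hm_pos : ∀ j, 1 ≤ j → 1 ≤ m j := fun j hj =>
    (Nat.one_le_ceil_iff.2 (by positivity)).trans (hmt j hj)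
  refine norm_sum_apply_smul_le_of_dual (fun f hf => ?_) z
  have coeff_le : ∀ k, 1 ≤ k → ‖f (x k)‖ ≤ 1 / 2 := fun k hk =>
    (f.le_of_opNorm_le hf (x k)).trans ((one_mul _).trans_le (hxnorm k hk))
  have card_level_le : ∀ j, 1 ≤ j → ∀ F : Finset ℕ, (∀ k ∈ F, 1 ≤ k) →
      (∀ k ∈ F, (1 / 2) ^ (j + 1) ≤ ‖f (x k)‖) → (F.card : ℝ) ≤ (4 * 2 ^ (j + 1)) ^ q' := by
    intro j _ F hF hfF
    refine (hx.card_le_of_le_norm_apply hqq' f (by positivity) hF hfF).trans ?_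
    have hq' := hqq'.symm.nonneg
    rw [mul_one, one_div, inv_pow, div_inv_eq_mul, ← mul_assoc]
    gcongr
    linarith
  refine (hxs.norm_sum_le_of_card_level_le hp0 hm hm_pos (fun j hj => Nat.ceil_le.1 (hmt j hj))
    coeff_le card_level_le N).trans ?_
  have hC := hxs.const_nonneg
  gcongr
  exact sum_level_contributions_le hp0 hp N

/-- Quantitative boundedness of the operator `T x = ∑_k x*_{m_k}(x) x_k`.
Here `t_j = ⌈(4·2^{j+1})^{q'}⌉` and
`α = 8^{q'/p} ∑_{j=1}^∞ 2^{-(1-q'/p)j} + 1`; under the stated upper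
`ℓ_p`-estimate on `(x*_k)` and upper `ℓ_q`-estimate on `(x_k)`, the partial
sums satisfy `‖∑_{k=1}^N x*_{m_k}(x) x_k‖ ≤ C(α+1)‖x‖`. -/
theorem partial_sums_uniformly_bounded
    {X : Type*} [NormedAddCommGroup X] [NormedSpace ℝ X] [CompleteSpace X]
    (q q' p C : ℝ) (hq : 1 < q) (hq' : 1 / q + 1 / q' = 1) (hp : q' < p)
    (hC : 0 < C)
    (xs : ℕ → X →L[ℝ] ℝ) (x : ℕ → X)
    (hxnorm : ∀ k, ‖x k‖ ≤ 1 / 2)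
    (hxs : ∀ (n : ℕ) (k : Fin n → ℕ), StrictMono k → (∀ i, n ≤ k i) →
      ∀ c : Fin n → ℝ, ‖∑ i, c i • xs (k i)‖ ≤ C * (∑ i, |c i| ^ p) ^ (1 / p))
    (hx : ∀ (n : ℕ) (k : Fin n → ℕ), StrictMono k → (∀ i, n ≤ k i) →
      ∀ c : Fin n → ℝ, ‖∑ i, c i • x (k i)‖ ≤ (∑ i, |c i| ^ q) ^ (1 / q))
    (m : ℕ → ℕ)
    (hmono : ∀ j, 1 ≤ j → m j < m (j + 1))
    (hmt : ∀ j, 1 ≤ j → ⌈(4 * 2 ^ (j + 1) : ℝ) ^ q'⌉₊ ≤ m j) :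
    ∀ (z : X) (N : ℕ), 1 ≤ N →
      ‖∑ k ∈ Finset.Icc 1 N, xs (m k) z • x k‖ ≤
        C * (((8 : ℝ) ^ (q' / p) *
            (∑' j : ℕ, (2 : ℝ) ^ (-(1 - q' / p) * ((j : ℝ) + 1))) + 1) + 1) * ‖z‖ :=
  fun z N _ => (partial_sums_uniformly_bounded_general
    (Real.holderConjugate_iff.2 ⟨hq, by simpa only [one_div] using hq'⟩) hp (fun k _ => hxnorm k)
    hxs (by simpa [HasUpperEstimate] using hx) hmono hmt z N).trans (by gcongr; linarith)
end

section
/- Let P be a nonempty set, w : P → ℕ a weight function, L_1 and L_2 disjoint sets of positive integers, and σ an injective function from the set of all finite nonempty tuples of elements of P into L_2. Call a finite tuple (p_1,...,p_d) of elements of P special if w(p_1) ∈ L_1 and w(p_q) = σ(p_1,...,p_{q−1}) for every 1 < q ≤ d; assume moreover that along every special tuple the weights are strictly increasing, i.e. w(p_1) < w(p_2) < ... < w(p_d). Let (n_k)_{k≥1} be a strictly increasing sequence of positive integers such that for every m ≥ 1 there exists a special tuple (p_1^m,...,p_{d_m}^m) with {n_1,...,n_m} ⊆ {w(p_q^m)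 : 1 ≤ q ≤ d_m}. Then there exists an infinite sequence (p_q)_{q≥1} in P such that every initial segment (p_1,...,p_d) is a special tuple and {n_k : k ≥ 1} ⊆ {w(p_q) : q ≥ 1}. -/
/-- A list `l = [p₁, …, p_d]` is a special tuple when it is nonempty, the
weight of its first entry lies in `L₁`, and for every later position `q` the
weight of the `q`-th entry equals `σ` applied to the preceding entries. -/
def SpecialTuple {P : Type*} (w : P → ℕ) (L₁ : Set ℕ) (σ : List P → ℕ)
    (l : List P) : Prop :=
  l ≠ [] ∧ ∀ (i : ℕ) (hi : i < l.length),
    (i = 0 → w (l.get ⟨i, hi⟩) ∈ L₁) ∧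
    (0 < i → w (l.get ⟨i, hi⟩) = σ (l.take i))

/-!
A weight that occurs in a special tuple after the first position equals `σ t`, where `t` is the list
of entries before it, so by injectivity of `σ` it determines `t`. If two special tuples share
`N + 2` weights, one of these lies beyond the first `N` entries of one tuple and is not at the first
entry of the other; both tuples then agree up to it. Hence the first `N` entries of the given tuples
stabilize, and their limit is the branch. No weight is lost in the limit, because a weight can only
occur at the first position or at the position right after the `t` it determines.
-/

theorem exists_seq_take_eq_ofFn {α : Type*} {L : ℕ → List α} (hlen : ∀ N, N ≤ (L N).length)
    (hstable : ∀ {N m}, N ≤ m → (L m).take N = (L N).take N) :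
    ∃ p : ℕ → α, ∀ {N m}, N ≤ m → (L m).take N = List.ofFn fun i : Fin N => p i := by
  refine ⟨fun i => (L (i + 1))[i]'(hlen (i + 1)), fun {N m} hNm => ?_⟩
  rw [hstable hNm]
  refine List.ext_getElem (by simpa using hlen N) fun i _ hi => ?_
  have hiN : i < N := by simpa only [List.length_ofFn] using hi
  have hentry : (L N)[i]? = (L (i + 1))[i]? := by
    simpa using congrArg (·[i]?) (hstable (Nat.succ_le_of_lt hiN))
  rw [List.getElem?_eq_getElem (hiN.trans_le (hlen N)),
    List.getElem?_eq_getElem (hlen (i + 1))] at hentry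
  simpa using hentry

theorem mem_take_append_cons {α : Type*} {t r : List α} {a : α} {N : ℕ} (hN : t.length < N) :
    a ∈ (t ++ a :: r).take N := by
  simp [List.take_append, List.take_cons (Nat.sub_pos_of_lt hN)]

namespace SpecialTuple

variable {P : Type*} {w : P → ℕ} {L₁ : Set ℕ} {σ : List P → ℕ} {l l' t r : List P} {a : P}

theorem take (hl : SpecialTuple w L₁ σ l) {d : ℕ} (hd : d ≠ 0) :
    SpecialTuple w L₁ σ (l.take d) := by
  refine ⟨by simpa using ⟨hd, hl.1⟩, fun i hi => ?_⟩
  obtain ⟨hid, hil⟩ := lt_min_iff.mp (List.length_take ▸ hi)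
  simpa [List.take_take, min_eq_left hid.le] using hl.2 i hil

theorem weight_eq_of_append (hl : SpecialTuple w L₁ σ (t ++ a :: r)) (ht : t ≠ []) :
    w a = σ t := by
  simpa using (hl.2 t.length (by simp)).2 (List.length_pos_of_ne_nil ht)

theorem take_eq_take_of_common_weights (hσ : Set.InjOn σ {t | t ≠ []})
    (hl : SpecialTuple w L₁ σ l) (hl' : SpecialTuple w L₁ σ l') {F : Finset ℕ}
    (hF : F ⊆ (l.map w).toFinset) (hF' : F ⊆ (l'.map w).toFinset) {N : ℕ} (hN : N + 1 < F.card) :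
    l.take N = l'.take N := by
  obtain ⟨c, hcF, hc⟩ : ∃ c ∈ F, c ∉ ((l.take N ++ l'.take 1).map w).toFinset := by
    refine Finset.exists_mem_notMem_of_card_lt_card (lt_of_le_of_lt ?_ hN)
    refine (List.toFinset_card_le _).trans ?_
    simp only [List.length_map, List.length_append, List.length_take]
    omega
  obtain ⟨a, hal, rfl⟩ := List.mem_map.mp (List.mem_toFinset.mp (hF hcF))
  obtain ⟨a', hal', haa'⟩ := List.mem_map.mp (List.mem_toFinset.mp (hF' hcF))
  obtain ⟨t, r, rfl⟩ := List.append_of_mem hal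
  obtain ⟨t', r', rfl⟩ := List.append_of_mem hal'
  have hwa : w a ∉ ((t ++ a :: r).take N).map w ∧ w a ∉ ((t' ++ a' :: r').take 1).map w := by
    simpa only [List.mem_toFinset, List.map_append, List.mem_append, not_or] using hc
  have hNt : N ≤ t.length := by
    by_contra! hlt
    exact hwa.1 (List.mem_map_of_mem (mem_take_append_cons hlt))
  have ht' : t' ≠ [] := by
    rintro rfl
    exact hwa.2 (by simp [haa'])
  rcases eq_or_ne t [] with rfl | ht
  · obtain rfl : N = 0 := by simpa using hNt
    simp
  · obtain rfl : t = t' := hσ ht ht' <| by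
      rw [← hl.weight_eq_of_append ht, ← hl'.weight_eq_of_append ht', haa']
    rw [List.take_append_of_le_length hNt, List.take_append_of_le_length hNt]

theorem exists_forall_weight_mem_take (hσ : Set.InjOn σ {t | t ≠ []}) (c : ℕ) :
    ∃ N, ∀ l, SpecialTuple w L₁ σ l → c ∈ l.map w → c ∈ (l.take N).map w := by
  obtain ⟨s, hs⟩ : ∃ s, ∀ t, t ≠ [] → σ t = c → t = s := by
    by_cases h : ∃ s, s ≠ [] ∧ σ s = c
    · obtain ⟨s, hs, rfl⟩ := h
      exact ⟨s, fun t ht hts => hσ ht hs hts⟩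
    · exact ⟨[], fun t ht htc => (h ⟨t, ht, htc⟩).elim⟩
  refine ⟨s.length + 1, fun l hl hc => ?_⟩
  obtain ⟨a, ha, rfl⟩ := List.mem_map.mp hc
  obtain ⟨t, r, rfl⟩ := List.append_of_mem ha
  refine List.mem_map_of_mem (mem_take_append_cons ?_)
  rcases eq_or_ne t [] with rfl | ht
  · simp
  · rw [hs t ht (hl.weight_eq_of_append ht).symm]
    exact Nat.lt_succ_self _

end SpecialTuple

theorem exists_branch_containing_weights_general
    {P : Type*} (w : P → ℕ) (L₁ : Set ℕ) (σ : List P → ℕ) (hσ : Set.InjOn σ {t | t ≠ []})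
    (n : ℕ → ℕ) (hn : Function.Injective n)
    (hex : ∀ m : ℕ, ∃ l : List P, SpecialTuple w L₁ σ l ∧ ∀ k < m, n k ∈ l.map w) :
    ∃ p : ℕ → P,
      (∀ d : ℕ, SpecialTuple w L₁ σ (List.ofFn fun i : Fin (d + 1) => p i)) ∧
      ∀ k : ℕ, ∃ q : ℕ, w (p q) = n k := by
  choose L hL hmem using fun m => hex (m + 2)
  have hcard : ∀ m, ((Finset.range m).image n).card = m := fun m => by
    rw [Finset.card_image_of_injective _ hn, Finset.card_range]
  have hsub : ∀ {N m}, N ≤ m → (Finset.range (N + 2)).image n ⊆ ((L m).map w).toFinset :=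
    fun hNm => Finset.image_subset_iff.mpr fun k hk =>
      List.mem_toFinset.mpr (hmem _ k (by have := Finset.mem_range.mp hk; omega))
  have hlen : ∀ N, N ≤ (L N).length := fun N => by
    have hle := (Finset.card_le_card (hsub (le_refl N))).trans (List.toFinset_card_le _)
    rw [hcard, List.length_map] at hle
    omega
  have hstable : ∀ {N m}, N ≤ m → (L m).take N = (L N).take N := fun {N m} hNm =>
    (hL m).take_eq_take_of_common_weights hσ (hL N) (hsub hNm) (hsub le_rfl)
      (by rw [hcard]; exact Nat.lt_succ_self _)
  obtain ⟨p, hp⟩ := exists_seq_take_eq_ofFn hlen hstable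
  refine ⟨p, fun d => hp (le_refl (d + 1)) ▸ (hL _).take d.succ_ne_zero, fun k => ?_⟩
  obtain ⟨N, hN⟩ := SpecialTuple.exists_forall_weight_mem_take (w := w) (L₁ := L₁) hσ (n k)
  have hk : n k ∈ ((L (N + k)).take N).map w := hN _ (hL _) (hmem _ k (by omega))
  rw [hp (Nat.le_add_right N k), List.map_ofFn, List.mem_ofFn] at hk
  obtain ⟨i, hi⟩ := hk
  exact ⟨i, hi⟩

/-- Abstract branch-extension lemma: if every finite initial collection of the
weights `n₁ < n₂ < ⋯` is realized inside the weights of some special tuple,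
then there is a single infinite branch (all of whose initial segments are
special tuples) whose weights contain all the `n_k`. -/
theorem exists_branch_containing_weights
    {P : Type*} [Nonempty P] (w : P → ℕ) (L₁ L₂ : Set ℕ)
    (hL₁pos : ∀ i ∈ L₁, 0 < i) (hL₂pos : ∀ i ∈ L₂, 0 < i)
    (hdisj : Disjoint L₁ L₂)
    (σ : List P → ℕ)
    (hσmem : ∀ l : List P, l ≠ [] → σ l ∈ L₂)
    (hσinj : ∀ l₁ l₂ : List P, l₁ ≠ [] → l₂ ≠ [] → σ l₁ = σ l₂ → l₁ = l₂)
    (hmono : ∀ l : List P, SpecialTuple w L₁ σ l →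
      ∀ (i j : ℕ) (hi : i < l.length) (hj : j < l.length), i < j →
        w (l.get ⟨i, hi⟩) < w (l.get ⟨j, hj⟩))
    (n : ℕ → ℕ) (hn : StrictMono n) (hnpos : ∀ k, 0 < n k)
    (hex : ∀ m : ℕ, ∃ l : List P, SpecialTuple w L₁ σ l ∧
      ∀ k < m, n k ∈ l.map w) :
    ∃ p : ℕ → P,
      (∀ d : ℕ, SpecialTuple w L₁ σ (List.ofFn fun i : Fin (d + 1) => p i)) ∧
      ∀ k : ℕ, ∃ q : ℕ, w (p q) = n k := by
  exact exists_branch_containing_weights_general w L₁ σ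
    (fun l₁ h₁ l₂ h₂ h => hσinj l₁ l₂ h₁ h₂ h) n hn.injective hex
end

section
/- Let X be a real Banach space, (S_n)_{n≥1} a sequence of nonzero bounded linear operators on X, and {x^n_k : n ≥ 1, k ≥ 1} a family of vectors in X with sup_k ‖x^1_k‖ < ∞, satisfying: S_n x^n_k = x^{n+1}_k for all n, k, and S_n x^l_k = 0 whenever l ≠ n. Then the series S = ∑_{n=1}^∞ (1/(2^n ‖S_n‖)) S_n converges in operator norm to a bounded operator S, and for all n, k one has S^n x^1_k = a_n x^{n+1}_k, where a_n = ∏_{j=1}^n 1/(2^j ‖S_j‖) and a_0 = 1. If moreover for every d ≥ 0, all k ≠ k′, and all reals b_0,...,b_d, b′_0,...,b′_d one has ‖∑_{n=0}^d b_n x^{n+1}_k − ∑_{n=0}^d b′_n x^{n+1}_{k′}‖ ≥ max_{0≤n≤d} |b_n|, then for every nonzero polynomial p(t) = ∑_{n=0}^d b_n t^n with real coefficients, the operator p(S) = ∑_{n=0}^d b_n S^n is not compact; in particular S is not polynomially compact. -/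
open Filter

/-!
The operator `T = ∑ wₙ Sₙ` acts on each sequence `n ↦ x n k` as a weighted shift, so a polynomial
`p(T) = ∑ bᵢ Tⁱ` sends `x 0 k` to the combination of the `x i k` whose coefficients are `bᵢ` times a
product of weights. These products are nonzero, so the separation hypothesis keeps the images of
the bounded family `x 0 k` at a fixed positive distance from one another, which a compact operator
cannot do.
-/

section WeightedShift

variable {R M : Type*} [CommSemiring R] [AddCommMonoid M] [Module R M]
  {f : Module.End R M} {w : ℕ → R} {v : ℕ → M}

theorem pow_apply_zero_eq_prod_smul (hf : ∀ n, f (v n) = w n • v (n + 1)) (n : ℕ) :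
    (f ^ n) (v 0) = (∏ j ∈ Finset.range n, w j) • v n := by
  induction n with
  | zero => simp
  | succ n ih => rw [pow_succ', Module.End.mul_apply, ih, map_smul, hf, smul_smul,
      Finset.prod_range_succ]

theorem sum_smul_pow_apply_zero_eq_sum_smul (hf : ∀ n, f (v n) = w n • v (n + 1))
    (s : Finset ℕ) (b : ℕ → R) :
    (∑ i ∈ s, b i • f ^ i) (v 0) = ∑ i ∈ s, (b i * ∏ j ∈ Finset.range i, w j) • v i := by
  simp only [LinearMap.sum_apply, LinearMap.smul_apply, pow_apply_zero_eq_prod_smul hf, smul_smul]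

end WeightedShift

theorem exists_ne_dist_lt_of_totallyBounded {α ι : Type*} [PseudoMetricSpace α] [Infinite ι]
    {s : Set α} (hs : TotallyBounded s) {u : ι → α} (hu : ∀ i, u i ∈ s) {ε : ℝ} (hε : 0 < ε) :
    ∃ i j, i ≠ j ∧ dist (u i) (u j) < ε := by
  obtain ⟨t, ht, hst⟩ := Metric.totallyBounded_iff.mp hs (ε / 2) (half_pos hε)
  have exists_center : ∀ i, ∃ c : t, dist (u i) c < ε / 2 := fun i => by
    simpa using hst (hu i)
  choose center hcenter using exists_center
  have : Finite t := ht
  obtain ⟨i, j, hij, hc⟩ := Finite.exists_ne_map_eq_of_infinite center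
  refine ⟨i, j, hij, ?_⟩
  calc dist (u i) (u j)
      ≤ dist (u i) (center i) + dist (u j) (center i) := dist_triangle_right _ _ _
    _ < ε / 2 + ε / 2 := add_lt_add (hcenter i) (hc ▸ hcenter j)
    _ = ε := add_halves ε

theorem not_isCompactOperator_of_pairwise_le_dist {𝕜 X Y ι : Type*} [NontriviallyNormedField 𝕜]
    [SeminormedAddCommGroup X] [NormedSpace 𝕜 X] [SeminormedAddCommGroup Y] [NormedSpace 𝕜 Y]
    [Infinite ι] {f : X →ₗ[𝕜] Y} {u : ι → X} (hu : Bornology.IsBounded (Set.range u))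
    {ε : ℝ} (hε : 0 < ε) (hsep : Pairwise fun i j => ε ≤ dist (f (u i)) (f (u j))) :
    ¬ IsCompactOperator f := by
  intro hf
  obtain ⟨K, hK, hKu⟩ := hf.image_subset_compact_of_bounded hu
  obtain ⟨i, j, hij, hlt⟩ := exists_ne_dist_lt_of_totallyBounded hK.totallyBounded
    (fun i => hKu (Set.mem_image_of_mem f (Set.mem_range_self i))) hε
  exact (hsep hij).not_gt hlt

theorem not_isCompactOperator_sum_smul_pow {𝕜 X ι : Type*} [NontriviallyNormedField 𝕜]
    [SeminormedAddCommGroup X] [NormedSpace 𝕜 X] [Infinite ι]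
    {f : Module.End 𝕜 X} {w : ℕ → 𝕜} (hw : ∀ n, w n ≠ 0) {x : ℕ → ι → X}
    (hx : Bornology.IsBounded (Set.range (x 0))) (hf : ∀ n k, f (x n k) = w n • x (n + 1) k)
    {s : Finset ℕ} {n : ℕ}
    (hsep : ∀ c : ℕ → 𝕜, Pairwise fun k k' =>
      ‖c n‖ ≤ ‖∑ i ∈ s, c i • x i k - ∑ i ∈ s, c i • x i k'‖)
    {b : ℕ → 𝕜} (hb : b n ≠ 0) :
    ¬ IsCompactOperator ⇑(∑ i ∈ s, b i • f ^ i) := by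
  set c : ℕ → 𝕜 := fun i => b i * ∏ j ∈ Finset.range i, w j
  have hc : c n ≠ 0 := mul_ne_zero hb (Finset.prod_ne_zero_iff.mpr fun j _ => hw j)
  have himage : ∀ k, (∑ i ∈ s, b i • f ^ i) (x 0 k) = ∑ i ∈ s, c i • x i k := fun k =>
    sum_smul_pow_apply_zero_eq_sum_smul (v := fun i => x i k) (fun i => hf i k) s b
  refine not_isCompactOperator_of_pairwise_le_dist hx (norm_pos_iff.mpr hc) fun k k' hkk' => ?_
  simpa only [himage, dist_eq_norm] using hsep c hkk'

theorem apply_eq_of_hasSum_of_forall_ne {𝕜 X Y α : Type*} [NontriviallyNormedField 𝕜]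
    [SeminormedAddCommGroup X] [NormedSpace 𝕜 X] [NormedAddCommGroup Y] [NormedSpace 𝕜 Y]
    {F : α → X →L[𝕜] Y} {T : X →L[𝕜] Y} (hT : HasSum F T) {a : α} {v : X}
    (hF : ∀ a', a' ≠ a → F a' v = 0) : T v = F a v :=
  (hT.mapL (ContinuousLinearMap.apply 𝕜 Y v)).unique (hasSum_single a hF)

theorem summable_norm_inv_two_pow_mul_norm_smul {E : Type*} [SeminormedAddCommGroup E]
    [NormedSpace ℝ E] (v : ℕ → E) :
    Summable fun n => ‖((2 ^ (n + 1) * ‖v n‖)⁻¹ : ℝ) • v n‖ := by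
  refine Summable.of_nonneg_of_le (fun n => norm_nonneg _) (fun n => ?_)
    ((summable_nat_add_iff 1).mpr summable_geometric_two)
  calc ‖((2 ^ (n + 1) * ‖v n‖)⁻¹ : ℝ) • v n‖
      = (1 / 2) ^ (n + 1) * (‖v n‖⁻¹ * ‖v n‖) := by
        rw [norm_smul, Real.norm_of_nonneg (by positivity), mul_inv, mul_assoc, one_div, inv_pow]
    _ ≤ (1 / 2) ^ (n + 1) := mul_le_of_le_one_right (by positivity) inv_mul_le_one

theorem strictly_singular_not_polynomially_compact_general
    {𝕜 X ι : Type*} [NontriviallyNormedField 𝕜] [NormedAddCommGroup X] [NormedSpace 𝕜 X]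
    [CompleteSpace X] [Infinite ι] {S : ℕ → X →L[𝕜] X} {w : ℕ → 𝕜} (hw : ∀ n, w n ≠ 0)
    (hwS : Summable fun n => ‖w n • S n‖) {x : ℕ → ι → X} {M : ℝ} (hxb : ∀ k, ‖x 0 k‖ ≤ M)
    (hSx : ∀ n k, S n (x n k) = x (n + 1) k)
    (hSzero : ∀ n l k, l ≠ n → S n (x l k) = 0) :
    ∃ T : X →L[𝕜] X, HasSum (fun n => w n • S n) T ∧
      (∀ n k, (T ^ n) (x 0 k) = (∏ j ∈ Finset.range n, w j) • x n k) ∧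
      ((∀ (d : ℕ) (k k' : ι), k ≠ k' → ∀ c : ℕ → 𝕜, ∀ n ≤ d,
          ‖c n‖ ≤ ‖∑ i ∈ Finset.range (d + 1), c i • x i k -
            ∑ i ∈ Finset.range (d + 1), c i • x i k'‖) →
        ∀ (d : ℕ) (b : ℕ → 𝕜), (∃ n ≤ d, b n ≠ 0) →
          ¬ IsCompactOperator ⇑(∑ i ∈ Finset.range (d + 1), b i • T ^ i)) := by
  obtain ⟨T, hT⟩ := hwS.of_norm
  have hshift : ∀ n k, T (x n k) = w n • x (n + 1) k := fun n k => by
    have hvanish : ∀ m, m ≠ n → (w m • S m) (x n k) = 0 := fun m hm => by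
      rw [smul_apply, hSzero m n k hm.symm, smul_zero]
    rw [apply_eq_of_hasSum_of_forall_ne hT hvanish, smul_apply, hSx]
  refine ⟨T, hT, fun n k => ?_, fun hsep d b ⟨n, hnd, hbn⟩ => ?_⟩
  · rw [← pow_apply_zero_eq_prod_smul (f := (T : X →ₗ[𝕜] X)) (v := fun n => x n k) (hshift · k) n,
      ← ContinuousLinearMap.toLinearMap_pow, ContinuousLinearMap.coe_coe]
  · have hx : Bornology.IsBounded (Set.range (x 0)) :=
      isBounded_iff_forall_norm_le.mpr ⟨M, Set.forall_mem_range.mpr hxb⟩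
    have hcoe : ((∑ i ∈ Finset.range (d + 1), b i • T ^ i : X →L[𝕜] X) : X →ₗ[𝕜] X) =
        ∑ i ∈ Finset.range (d + 1), b i • (T : X →ₗ[𝕜] X) ^ i := by push_cast; rfl
    rw [← ContinuousLinearMap.coe_coe, hcoe]
    exact not_isCompactOperator_sum_smul_pow hw hx hshift
      (fun c k k' hkk' => hsep d k k' hkk' c n hnd) hbn

/-- Here `x n k` denotes the vector `x^{n+1}_k` of the paper and `S n` the
operator `S_{n+1}` (indices shifted to start at `0`).  The series
`S = ∑_n (1/(2^{n+1}‖S_n‖)) S_n` converges in operator norm, its powers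
satisfy `Sⁿ x⁰_k = aₙ • xⁿ_k` with `aₙ = ∏_{j<n} 1/(2^{j+1}‖S_j‖)`, and if the
vectors `x^n_k` satisfy the displayed separation estimate, then no nonzero
polynomial in `S` is a compact operator. -/
theorem strictly_singular_not_polynomially_compact
    {X : Type*} [NormedAddCommGroup X] [NormedSpace ℝ X] [CompleteSpace X]
    (S : ℕ → X →L[ℝ] X) (hS : ∀ n, S n ≠ 0)
    (x : ℕ → ℕ → X) (M : ℝ) (hxb : ∀ k, ‖x 0 k‖ ≤ M)
    (hSx : ∀ n k, S n (x n k) = x (n + 1) k)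
    (hSzero : ∀ n l k, l ≠ n → S n (x l k) = 0) :
    ∃ Ssum : X →L[ℝ] X,
      Tendsto
        (fun N => ∑ n ∈ Finset.range N, ((2 ^ (n + 1) * ‖S n‖)⁻¹ : ℝ) • S n)
        atTop (nhds Ssum) ∧
      (∀ n k : ℕ, (Ssum ^ n) (x 0 k) =
        (∏ j ∈ Finset.range n, ((2 ^ (j + 1) * ‖S j‖)⁻¹ : ℝ)) • x n k) ∧
      ((∀ (d : ℕ) (k k' : ℕ), k ≠ k' → ∀ b b' : ℕ → ℝ, ∀ n ≤ d,
          |b n| ≤ ‖(∑ i ∈ Finset.range (d + 1), b i • x i k) -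
                    (∑ i ∈ Finset.range (d + 1), b' i • x i k')‖) →
        ∀ (d : ℕ) (b : ℕ → ℝ), (∃ n ≤ d, b n ≠ 0) →
          ¬ IsCompactOperator
              (⇑(∑ i ∈ Finset.range (d + 1), b i • Ssum ^ i))) := by
  obtain ⟨T, hT, hpow, hcompact⟩ := strictly_singular_not_polynomially_compact_general
    (fun n => inv_ne_zero (mul_ne_zero (by positivity) (norm_ne_zero_iff.mpr (hS n))))
    (summable_norm_inv_two_pow_mul_norm_smul S) hxb hSx hSzero
  exact ⟨T, hT.tendsto_sum_nat, hpow, fun hsep =>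
    hcompact fun d k k' hkk' c => hsep d k k' hkk' c c⟩
end
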